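/- arXiv:1309.2123 — 3 statements merged into one kernel-verified Lean document; each statement's English description precedes it below -/
import Mathlib

section
/- Let α, β, c be real numbers such that 1+β, α+β+2c+2, c+1, α+β+c+1 and α+β+2c+1 are not nonpositive integers, let x ∈ (0,1) be real, and let t be real with 0 < |t| < 1. Set δ = ((1+t) − √((1+t)² − 4xt))/(2t), with the principal branch of the square root. Then Σ_{n=0}^{∞} ((α+β+c+1)_n (c+1)_n)/((α+β+2c+2)_n) · U_n^{(α,β)}(x;c) · t^n/n! = (δ^{α+β+c+1})/(x^{β+c+1}·(x−tδ)^{α}) · F(−c, α+β+c+1; 1+β; δ) · F(β+c+1, c+1; α+β+2c+2; tδ/x), where complex powers are taken with the principal branch. -/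
noncomputable section

/-- Rising factorial (Pochhammer symbol) `(a)_n = a(a+1)⋯(a+n-1)`. -/
def poch (a : ℝ) (n : ℕ) : ℝ := ∏ i ∈ Finset.range n, (a + (i : ℝ))

/-- The Gauss hypergeometric series `F(a,b;c;x) = Σ_{k≥0} (a)_k (b)_k / ((c)_k k!) xᵏ`. -/
def hyp (a b c x : ℝ) : ℝ :=
  ∑' k : ℕ, poch a k * poch b k / (poch c k * (Nat.factorial k : ℝ)) * x ^ k

/-- The Gauss hypergeometric function for real arguments `z < 1`, extended by
(principal branch) analytic continuation to arguments `z ≤ -1` via the Pfaff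
transformation `F(a,b;c;z) = (1-z)^{-a} F(a, c-b; c; z/(z-1))`, whose right-hand
side converges for all `z < 0`. -/
def hypExt (a b c z : ℝ) : ℝ :=
  if z < 0 then (1 - z) ^ (-a) * hyp a (c - b) c (z / (z - 1)) else hyp a b c z

/-- `δ = ((1+t) − √((1+t)² − 4xt))/(2t)`; for `x ∈ (0,1)` and `0 < |t| < 1` the
radicand is positive, so the principal branch of the complex square root is
the real square root. -/
def deltaF (x t : ℝ) : ℝ := ((1 + t) - Real.sqrt ((1 + t)^2 - 4*x*t)) / (2*t)

/-- `U_n^{(α,β)}(x;c)`. -/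
def Ufun (α β c : ℝ) (n : ℕ) (x : ℝ) : ℝ :=
  (-1 : ℝ)^n * (poch (β + c + 1) n / poch (c + 1) n)
    * hyp (-(n:ℝ) - c) ((n:ℝ) + α + β + c + 1) (1 + β) x

/-- `Ũ_n^{(α,β)}(x;c)`. -/
def Ut (α β c : ℝ) (n : ℕ) (x : ℝ) : ℝ :=
  (poch (c + 1) n * poch (α + β + c + 1) n / poch (α + β + 2*c + 1) (2*n)) * Ufun α β c n x

section Helpers
open Filter Topology Set Asymptotics

lemma ps_series (u : ℕ → ℝ) (hu : ∀ x : ℝ, |x| < 1 → Summable (fun k => u k * x ^ k)) :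
    HasFPowerSeriesOnBall (fun x : ℝ => ∑' k, u k * x ^ k)
      (FormalMultilinearSeries.ofScalars ℝ u) 0 1 := by
  have hr : 1 ≤ (FormalMultilinearSeries.ofScalars ℝ u).radius := by
    refine le_of_forall_lt fun r hr => ?_
    lift r to NNReal using ne_top_of_lt hr
    obtain ⟨r', h1, h2⟩ := ENNReal.lt_iff_exists_nnreal_btwn.1 hr
    refine lt_of_lt_of_le h1 (FormalMultilinearSeries.le_radius_of_summable _ ?_)
    have hr1 : (r' : ℝ) < 1 := by exact_mod_cast h2
    have := (hu r' (by simpa using hr1)).norm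
    refine this.congr fun k => ?_
    simp
  have h := (FormalMultilinearSeries.ofScalars ℝ u).hasFPowerSeriesOnBall
    (lt_of_lt_of_le one_pos hr)
  have h2 := h.mono one_pos hr
  refine h2.congr fun y hy => ?_
  simp [FormalMultilinearSeries.sum, mul_comm]

lemma ps_deriv (u : ℕ → ℝ) (hu : ∀ x : ℝ, |x| < 1 → Summable (fun k => u k * x ^ k))
    (x : ℝ) (hx : |x| < 1) :
    HasSum (fun k : ℕ => ((k : ℝ) + 1) * u (k + 1) * x ^ k)
      (deriv (fun x : ℝ => ∑' k, u k * x ^ k) x) := by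
  have h := (ps_series u hu).fderiv
  have hm : x ∈ Metric.eball (0 : ℝ) 1 := by
    simp only [Metric.mem_eball, edist_zero_right]
    rw [← ofReal_norm]
    simpa using hx
  have h1 := h.hasSum hm
  have h2 := h1.mapL (ContinuousLinearMap.apply ℝ ℝ (1 : ℝ))
  simp only [zero_add, ContinuousLinearMap.apply_apply, fderiv_apply_one_eq_deriv] at h2
  convert! h2 using 2 with k
  have h3 := (FormalMultilinearSeries.ofScalars ℝ u).derivSeries_coeff_one k
  have : ((FormalMultilinearSeries.ofScalars ℝ u).derivSeries k fun _ => x)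
     = x ^ k • (FormalMultilinearSeries.ofScalars ℝ u).derivSeries.coeff k := by
    exact FormalMultilinearSeries.apply_eq_pow_smul_coeff
  rw [this]
  simp [h3, FormalMultilinearSeries.coeff_ofScalars]
  ring

lemma taylor_eq (u : ℕ → ℝ) (hu : ∀ x : ℝ, |x| < 1 → Summable (fun k => u k * x ^ k))
    (h : ℝ → ℝ) (hh : AnalyticAt ℝ h 0) (hk : ∀ k, iteratedDeriv k h 0 = k.factorial * u k) :
    h =ᶠ[𝓝 0] (fun x : ℝ => ∑' k, u k * x ^ k) := by
  have h1 := hh.hasFPowerSeriesAt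
  have : (FormalMultilinearSeries.ofScalars ℝ fun n => iteratedDeriv n h 0 / (n.factorial:ℝ))
     = FormalMultilinearSeries.ofScalars ℝ u := by
    congr 1; ext n; rw [hk]
    field_simp
  rw [this] at h1
  have h2 := (ps_series u hu).hasFPowerSeriesAt
  have h3 := h1.sub h2
  rw [sub_self] at h3
  have := h3.locally_zero_iff.2 rfl
  filter_upwards [this] with z hz
  simpa [sub_eq_zero] using hz

lemma ps_analytic (u : ℕ → ℝ) (hu : ∀ x : ℝ, |x| < 1 → Summable (fun k => u k * x ^ k)) :
    ∀ x : ℝ, |x| < 1 → AnalyticAt ℝ (fun x : ℝ => ∑' k, u k * x ^ k) x := by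
  intro x hx
  apply (ps_series u hu).analyticAt_of_mem
  simp only [Metric.mem_eball, edist_zero_right]
  rw [← ofReal_norm]
  simpa using hx

lemma poch_zero (a : ℝ) : poch a 0 = 1 := by simp [poch]
lemma poch_succ (a : ℝ) (n : ℕ) : poch a (n + 1) = poch a n * (a + n) := by
  simp [poch, Finset.prod_range_succ]
lemma poch_succ' (a : ℝ) (n : ℕ) : poch a (n + 1) = a * poch (a + 1) n := by
  simp only [poch, Finset.prod_range_succ']
  rw [mul_comm]; simp
  left
  apply Finset.prod_congr rfl; intros; ring
lemma poch_ne (a : ℝ) (ha : ∀ m : ℕ, a ≠ -(m : ℝ)) (n : ℕ) : poch a n ≠ 0 := by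
  rw [poch, Finset.prod_ne_zero_iff]
  intro i _ h
  exact ha i (by linarith)

/-- coefficient -/
def hc (a b c : ℝ) (k : ℕ) : ℝ := poch a k * poch b k / (poch c k * (Nat.factorial k : ℝ))

lemma hc_succ (a b c : ℝ) (hcn : ∀ m : ℕ, c ≠ -(m : ℝ)) (k : ℕ) :
    hc a b c (k + 1) * ((c + k) * (k + 1)) = (a + k) * (b + k) * hc a b c k := by
  have h1 := poch_ne c hcn k
  have h2 : c + k ≠ 0 := fun h => hcn k (by linarith)
  simp only [hc, poch_succ, Nat.factorial_succ]
  push_cast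
  have : (k : ℝ) + 1 ≠ 0 := by positivity
  have : (k.factorial : ℝ) ≠ 0 := by positivity
  field_simp

lemma ratio_tendsto (a b c : ℝ) :
    Tendsto (fun k : ℕ => (a + k) * (b + k) / ((c + k) * (k + 1)) : ℕ → ℝ) atTop (𝓝 1) := by
  have key : ∀ d e : ℝ, Tendsto (fun k : ℕ => (d + k) / (e + k) : ℕ → ℝ) atTop (𝓝 1) := by
    intro d e
    have := tendsto_add_mul_div_add_mul_atTop_nhds d e (1:ℝ) (d := 1) one_ne_zero
    simpa using this
  have := (key a c).mul (key b 1)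
  rw [one_mul] at this
  refine this.congr fun k => ?_
  rw [div_mul_div_comm, add_comm (1:ℝ)]

lemma hc_summable (a b c : ℝ) (hcn : ∀ m : ℕ, c ≠ -(m : ℝ)) (x : ℝ) (hx : |x| < 1) :
    Summable (fun k => hc a b c k * x ^ k) := by
  obtain ⟨r, hr1, hr2⟩ := exists_between hx
  have ht := ((ratio_tendsto a b c).norm.mul_const |x|)
  simp only [norm_one, one_mul] at ht
  refine summable_of_ratio_norm_eventually_le hr2 ?_
  filter_upwards [ht.eventually_le_const hr1] with k hk
  have h2 : c + k ≠ 0 := fun h => hcn k (by linarith)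
  have h3 : (k : ℝ) + 1 ≠ 0 := by positivity
  have : hc a b c (k+1) = (a + k) * (b + k) / ((c + k) * (k + 1)) * hc a b c k := by
    rw [div_mul_eq_mul_div, eq_div_iff (mul_ne_zero h2 h3), hc_succ a b c hcn]
  rw [this, pow_succ]
  calc _ = (‖(a + k) * (b + k) / ((c + k) * (k + 1))‖ * |x|) * ‖hc a b c k * x ^ k‖ := by
        simp only [norm_mul, Real.norm_eq_abs]; ring
    _ ≤ _ := by gcongr

lemma hyp_eq (a b c x : ℝ) : hyp a b c x = ∑' k, hc a b c k * x ^ k := rfl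

lemma hyp_analytic (a b c : ℝ) (hcn : ∀ m : ℕ, c ≠ -(m : ℝ)) (x : ℝ) (hx : |x| < 1) :
    AnalyticAt ℝ (hyp a b c) x := ps_analytic (hc a b c) (hc_summable a b c hcn) x hx

lemma hyp_zero (a b c : ℝ) : hyp a b c 0 = 1 := by
  rw [hyp_eq, tsum_eq_single 0]
  · simp [hc, poch_zero]
  · intro k hk; simp [hk]

lemma hyp_comm (a b c x : ℝ) : hyp a b c x = hyp b a c x := by
  simp only [hyp, mul_comm (poch a _)]

lemma shift_sum (v : ℕ → ℝ) (x s : ℝ) (h : HasSum (fun k : ℕ => ((k:ℝ) + 1) * v (k+1) * x ^ k) s) :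
    HasSum (fun k : ℕ => (k:ℝ) * v k * x ^ k) (x * s) := by
  rw [← hasSum_nat_add_iff' 1]
  have e : (fun k : ℕ => ((k + 1 : ℕ) : ℝ) * v (k + 1) * x ^ (k + 1))
      = fun k : ℕ => x * (((k:ℝ) + 1) * v (k+1) * x ^ k) := by
    ext k; push_cast; ring
  rw [e]
  simpa using h.mul_left x

/-- hypergeometric ODE -/
lemma hyp_ode (a b c : ℝ) (hcn : ∀ m : ℕ, c ≠ -(m : ℝ)) (x : ℝ) (hx : |x| < 1) :
    x * (1 - x) * deriv (deriv (hyp a b c)) x + (c - (a + b + 1) * x) * deriv (hyp a b c) x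
      - a * b * hyp a b c x = 0 := by
  set u := hc a b c with hu
  have hs := hc_summable a b c hcn
  set v : ℕ → ℝ := fun k => ((k : ℝ) + 1) * u (k + 1) with hv
  have hvs : ∀ x : ℝ, |x| < 1 → Summable (fun k => v k * x ^ k) := fun x hx =>
    (ps_deriv u hs x hx).summable
  have e1 : ∀ x : ℝ, |x| < 1 → deriv (hyp a b c) x = ∑' k, v k * x ^ k := fun x hx =>
    (ps_deriv u hs x hx).tsum_eq.symm
  have e2 : deriv (deriv (hyp a b c)) x = deriv (fun x => ∑' k, v k * x ^ k) x := by
    apply Filter.EventuallyEq.deriv_eq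
    have : ∀ᶠ y : ℝ in 𝓝 x, |y| < 1 := (isOpen_lt continuous_abs continuous_const).mem_nhds hx
    filter_upwards [this] with y hy using e1 y hy
  have H0 : HasSum (fun k => u k * x ^ k) (hyp a b c x) := (hs x hx).hasSum
  have H1 : HasSum (fun k : ℕ => ((k : ℝ) + 1) * u (k + 1) * x ^ k) (deriv (hyp a b c) x) :=
    ps_deriv u hs x hx
  have H2 := ps_deriv v hvs x hx
  rw [← e2] at H2
  have H1x := shift_sum u x _ H1
  have H2x := shift_sum v x _ H2
  have H2xx : HasSum (fun k : ℕ => (k:ℝ) * (((k:ℝ) - 1) * u k) * x ^ k)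
      (x * (x * deriv (deriv (hyp a b c)) x)) := by
    apply shift_sum (fun k : ℕ => ((k:ℝ) - 1) * u k)
    convert! H2x using 2 with k
    simp only [hv]; push_cast; ring
  have := (((H2x.sub H2xx).add (H1.mul_left c)).sub (H1x.mul_left (a+b+1))).sub (H0.mul_left (a*b))
  have z : HasSum (fun _ : ℕ => (0:ℝ)) (x * deriv (deriv (hyp a b c)) x -
     x * (x * deriv (deriv (hyp a b c)) x) + c * deriv (hyp a b c) x
     - (a + b + 1) * (x * deriv (hyp a b c) x) - a * b * hyp a b c x) := by
    convert! this using 2 with k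
    have := hc_succ a b c hcn k
    simp only [hv]
    rw [← hu] at this
    linear_combination -x ^ k * this
  have z2 := z.unique hasSum_zero
  linarith

/-- `h` satisfies the hypergeometric ODE at `x`. -/
def ODE (a b c : ℝ) (h : ℝ → ℝ) (x : ℝ) : Prop :=
  x * (1 - x) * deriv (deriv h) x + (c - (a + b + 1) * x) * deriv h x - a * b * h x = 0

lemma ode_deriv (a b c : ℝ) (h : ℝ → ℝ) (x : ℝ) (hh : AnalyticAt ℝ h x)
    (ho : ∀ᶠ y in 𝓝 x, ODE a b c h y) : ODE (a+1) (b+1) (c+1) (deriv h) x := by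
  have d0 := hh.differentiableAt.hasDerivAt
  have d1 := hh.deriv.differentiableAt.hasDerivAt
  have d2 := hh.deriv.deriv.differentiableAt.hasDerivAt
  have i := hasDerivAt_id x
  have D := (((i.mul (i.const_sub 1)).mul d2).add (((i.const_mul (a+b+1)).const_sub c).mul d1)).sub
    (d0.const_mul (a*b))
  have Z : HasDerivAt (fun _ : ℝ => (0:ℝ)) _ x := D.congr_of_eventuallyEq (by
    filter_upwards [ho] with y hy
    simp only [ODE] at hy
    simp only [Pi.mul_apply, Pi.add_apply, Pi.sub_apply, id]
    exact hy.symm)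
  have := Z.unique (hasDerivAt_const x (0:ℝ))
  simp only [ODE, id, Pi.mul_apply] at this ⊢
  linarith

lemma ode_iter (a b c : ℝ) (hcn : ∀ m : ℕ, c ≠ -(m : ℝ)) (h : ℝ → ℝ) (hh : AnalyticAt ℝ h 0)
    (ho : ∀ᶠ y in 𝓝 0, ODE a b c h y) (k : ℕ) :
    iteratedDeriv k h 0 = k.factorial * (h 0 * hc a b c k) := by
  induction k generalizing a b c h with
  | zero => simp [hc, poch_zero]
  | succ k ih =>
    rw [iteratedDeriv_succ']
    have h1 : ∀ᶠ y in 𝓝 0, ODE (a+1) (b+1) (c+1) (deriv h) y := by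
      filter_upwards [ho.eventually_nhds, hh.eventually_analyticAt] with y hy hy2
      exact ode_deriv _ _ _ _ _ hy2 hy
    have hcn' : ∀ m : ℕ, c + 1 ≠ -(m : ℝ) := fun m hm => hcn (m+1) (by push_cast; linarith)
    rw [ih (a+1) (b+1) (c+1) hcn' (deriv h) hh.deriv h1]
    have h0 := ho.self_of_nhds
    simp only [ODE] at h0
    have c0 : c ≠ 0 := by simpa using hcn 0
    have h0' : deriv h 0 = a * b * h 0 / c := by field_simp; linarith
    rw [h0']
    simp only [hc, poch_succ', Nat.factorial_succ]
    push_cast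
    have := poch_ne _ hcn' k
    have : (k : ℝ) + 1 ≠ 0 := by positivity
    field_simp

/-- uniqueness of the regular solution -/
lemma ode_unique (a b c : ℝ) (hcn : ∀ m : ℕ, c ≠ -(m : ℝ)) (h : ℝ → ℝ) (hh : AnalyticAt ℝ h 0)
    (ho : ∀ᶠ y in 𝓝 0, ODE a b c h y) : h =ᶠ[𝓝 0] fun x => h 0 * hyp a b c x := by
  have := taylor_eq (fun k => h 0 * hc a b c k) (fun x hx => by
    simpa [mul_assoc] using (hc_summable a b c hcn x hx).mul_left (h 0)) h hh
    (ode_iter a b c hcn h hh ho)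
  filter_upwards [this] with x hx
  rw [hx, hyp_eq, ← tsum_mul_left]
  simp [mul_assoc]

lemma an_rpow {E : Type*} [NormedAddCommGroup E] [NormedSpace ℝ E] {f : E → ℝ} {z : E}
    (hf : AnalyticAt ℝ f z) (h0 : 0 < f z) (s : ℝ) : AnalyticAt ℝ (fun y => f y ^ s) z := by
  have h2 : AnalyticAt ℝ (fun y => Real.log (f y)) z :=
    AnalyticAt.fun_comp (analyticAt_log h0) hf
  have h3 : AnalyticAt ℝ (fun y => Real.log (f y) * s) z := h2.mul analyticAt_const
  have h1 : AnalyticAt ℝ (fun y => Real.exp (Real.log (f y) * s)) z :=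
    AnalyticAt.fun_comp (g := Real.exp) analyticAt_rexp h3
  refine h1.congr ?_
  filter_upwards [hf.continuousAt.eventually_const_lt h0] with y hy
  rw [Real.rpow_def_of_pos hy]

lemma abs_v (z : ℝ) (hz : z < 1 / 2) : |z / (z - 1)| < 1 := by
  rw [abs_div, div_lt_one (by rw [abs_pos]; linarith)]
  rw [abs_of_neg (show z - 1 < 0 by linarith)]
  rw [abs_lt]; constructor <;> linarith

lemma hyp_hd (a b c : ℝ) (hcn : ∀ m : ℕ, c ≠ -(m : ℝ)) (x : ℝ) (hx : |x| < 1) :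
    HasDerivAt (hyp a b c) (deriv (hyp a b c) x) x :=
  (hyp_analytic a b c hcn x hx).differentiableAt.hasDerivAt

lemma hyp_hd2 (a b c : ℝ) (hcn : ∀ m : ℕ, c ≠ -(m : ℝ)) (x : ℝ) (hx : |x| < 1) :
    HasDerivAt (deriv (hyp a b c)) (deriv (deriv (hyp a b c)) x) x :=
  (hyp_analytic a b c hcn x hx).deriv.differentiableAt.hasDerivAt

lemma hasDeriv_one_sub_rpow (s z : ℝ) (hz : z < 1) :
    HasDerivAt (fun z : ℝ => (1 - z) ^ s) (-s * ((1 - z) ^ s / (1 - z))) z := by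
  have := ((hasDerivAt_id z).const_sub 1).rpow_const (p := s) (Or.inl (by simp; linarith))
  convert! this using 1
  simp only [id]
  rw [Real.rpow_sub_one (by linarith)]
  ring

lemma hasDeriv_v (z : ℝ) (hz : z < 1) :
    HasDerivAt (fun z : ℝ => z / (z - 1)) (-1 / (1 - z) ^ 2) z := by
  have h : z - 1 ≠ 0 := by linarith
  have h' : 1 - z ≠ 0 := by linarith
  have := (hasDerivAt_id z).div ((hasDerivAt_id z).sub_const 1) h
  convert! this using 1
  simp only [id]
  rw [show (z-1)^2 = (1-z)^2 by ring]
  congr 1; ring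

lemma pfaff (a b c : ℝ) (hcn : ∀ m : ℕ, c ≠ -(m : ℝ)) :
    ∀ᶠ z in 𝓝 (0:ℝ), (1 - z) ^ (-a) * hyp a (c - b) c (z / (z - 1)) = hyp a b c z := by
  set P : ℝ → ℝ := fun z => (1 - z) ^ (-a) * hyp a (c - b) c (z / (z - 1)) with hP
  set F := hyp a (c - b) c with hF
  have hlt : ∀ᶠ z : ℝ in 𝓝 0, z < 1 / 2 := eventually_lt_nhds (by norm_num)
  have hPa : AnalyticAt ℝ P 0 := by
    apply AnalyticAt.mul
    · exact an_rpow (by fun_prop) (by norm_num) _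
    · have h1 : AnalyticAt ℝ (fun z : ℝ => z / (z - 1)) 0 := by
        apply AnalyticAt.div (by fun_prop) (by fun_prop) (by norm_num)
      exact AnalyticAt.fun_comp (hyp_analytic a (c - b) c hcn _ (abs_v 0 (by norm_num))) h1
  have d1 : ∀ z : ℝ, z < 1 / 2 → HasDerivAt P ((1 - z) ^ (-a) *
      (a / (1 - z) * F (z / (z - 1)) - deriv F (z / (z - 1)) / (1 - z) ^ 2)) z := by
    intro z hz
    have h := (hasDeriv_one_sub_rpow (-a) z (by linarith)).mul
      ((hyp_hd a (c - b) c hcn _ (abs_v z hz)).comp z (hasDeriv_v z (by linarith)))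
    convert! h using 1
    simp only [Function.comp]
    ring
  have d2 : ∀ z : ℝ, z < 1 / 2 → HasDerivAt (deriv P) ((1 - z) ^ (-a) * (a / (1 - z) *
      (a / (1 - z) * F (z / (z - 1)) - deriv F (z / (z - 1)) / (1 - z) ^ 2)
      + (a / (1 - z) ^ 2 * F (z / (z - 1)) - a / (1 - z) ^ 3 * deriv F (z / (z - 1))
         + deriv (deriv F) (z / (z - 1)) / (1 - z) ^ 4
         - 2 * deriv F (z / (z - 1)) / (1 - z) ^ 3))) z := by
    intro z hz
    have hz' : 1 - z ≠ 0 := by linarith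
    have i1 : HasDerivAt (fun z : ℝ => (1 - z)⁻¹) (1 / (1 - z) ^ 2) z := by
      have := ((hasDerivAt_id z).const_sub 1).inv hz'
      convert! this using 1
      simp
    have hf := (hyp_hd a (c - b) c hcn _ (abs_v z hz)).comp z (hasDeriv_v z (by linarith))
    have hf2 := (hyp_hd2 a (c - b) c hcn _ (abs_v z hz)).comp z (hasDeriv_v z (by linarith))
    have h := (hasDeriv_one_sub_rpow (-a) z (by linarith)).mul
      (((i1.const_mul a).mul hf).sub (hf2.mul (i1.pow 2)))
    refine (h.congr_of_eventuallyEq ?_).congr_deriv ?_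
    · have : ∀ᶠ y : ℝ in 𝓝 z, y < 1 / 2 := eventually_lt_nhds hz
      filter_upwards [this] with y hy
      rw [(d1 y hy).deriv]
      simp [Function.comp, div_eq_mul_inv]
      left; rfl
    · simp only [Function.comp, Pi.mul_apply, Pi.sub_apply, Pi.pow_apply,
        show (2:ℕ) - 1 = 1 from rfl, pow_one]
      rw [← hF]
      push_cast
      field_simp
      ring
  have ho : ∀ᶠ z in 𝓝 0, ODE a b c P z := by
    filter_upwards [hlt] with z hz
    have h := hyp_ode a (c - b) c hcn _ (abs_v z hz)
    rw [← hF] at h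
    simp only [ODE, (d1 z hz).deriv, (d2 z hz).deriv]
    have hz' : 1 - z ≠ 0 := by linarith
    simp only [hP]
    have e1 : z / (z - 1) = - z / (1 - z) := by
      rw [show z - 1 = -(1-z) by ring, div_neg, neg_div]
    generalize F (z / (z - 1)) = F0 at *
    generalize deriv F (z / (z - 1)) = F1 at *
    generalize deriv (deriv F) (z / (z - 1)) = F2 at *
    rw [e1] at h
    generalize (1 - z) ^ (-a) = E at *
    field_simp at h ⊢
    linear_combination -E * h
  have := ode_unique a b c hcn P hPa ho
  filter_upwards [this] with z hz
  have hz2 : P z = P 0 * hyp a b c z := hz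
  have h0 : P 0 = 1 := by simp [hP, hF, hyp_zero]
  rw [h0, one_mul] at hz2
  exact hz2

lemma hypExt_ev (a b c : ℝ) (hcn : ∀ m : ℕ, c ≠ -(m : ℝ)) :
    ∀ᶠ z in 𝓝 (0:ℝ), hypExt a b c z = hyp a b c z := by
  filter_upwards [pfaff a b c hcn] with z hz
  unfold hypExt
  split_ifs
  · exact hz
  · rfl

lemma hypExt_analytic (a b c : ℝ) (hcn : ∀ m : ℕ, c ≠ -(m : ℝ)) (z : ℝ) (hz : z < 1) :
    AnalyticAt ℝ (hypExt a b c) z := by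
  rcases lt_trichotomy z 0 with h | h | h
  · have h1 : AnalyticAt ℝ (fun z : ℝ => z / (z - 1)) z := by
        apply AnalyticAt.div (by fun_prop) (by fun_prop) (by linarith)
    have h2 : AnalyticAt ℝ (fun z => (1 - z) ^ (-a) * hyp a (c - b) c (z / (z - 1))) z :=
      (an_rpow (by fun_prop) (by linarith) _).mul
        (AnalyticAt.fun_comp (hyp_analytic a (c - b) c hcn _ (abs_v z (by linarith))) h1)
    refine h2.congr ?_
    filter_upwards [eventually_lt_nhds h] with y hy
    simp [hypExt, hy]
  · subst h
    exact (hyp_analytic a b c hcn 0 (by simp)).congr ((hypExt_ev a b c hcn).mono fun z h => h.symm)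
  · refine (hyp_analytic a b c hcn z (by rw [abs_lt]; constructor <;> linarith)).congr ?_
    filter_upwards [eventually_gt_nhds h] with y hy
    simp [hypExt, not_lt.2 hy.le]

lemma euler (a b c : ℝ) (hcn : ∀ m : ℕ, c ≠ -(m : ℝ)) :
    ∀ᶠ z in 𝓝 (0:ℝ), hyp a b c z = (1 - z) ^ (c - a - b) * hyp (c - a) (c - b) c z := by
  have ht : Tendsto (fun z : ℝ => z / (z - 1)) (𝓝 0) (𝓝 0) := by
    have : ContinuousAt (fun z : ℝ => z / (z - 1)) 0 :=
      (hasDeriv_v 0 (by norm_num)).continuousAt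
    simpa [ContinuousAt] using this
  filter_upwards [pfaff a b c hcn, ht.eventually (pfaff (c - b) a c hcn),
    eventually_lt_nhds (show (0:ℝ) < 1/2 by norm_num)] with z h1 h2 hz
  have hz' : z - 1 ≠ 0 := by linarith
  have e1 : z / (z - 1) / (z / (z - 1) - 1) = z := by field_simp; ring_nf
  have e2 : 1 - z / (z - 1) = (1 - z)⁻¹ := by
    have : 1 - z ≠ 0 := by linarith
    field_simp; ring
  rw [e1, e2] at h2
  rw [← h1, hyp_comm a, ← h2, hyp_comm (c - b), ← mul_assoc, Real.inv_rpow (by linarith),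
    ← Real.rpow_neg (by linarith), ← Real.rpow_add (by linarith)]
  congr 2; ring

def Dx (Φ : ℝ × ℝ → ℝ) (p : ℝ × ℝ) : ℝ := fderiv ℝ Φ p (1, 0)
def Dt (Φ : ℝ × ℝ → ℝ) (p : ℝ × ℝ) : ℝ := fderiv ℝ Φ p (0, 1)

lemma Dx_an {Φ : ℝ × ℝ → ℝ} {p : ℝ × ℝ} (h : AnalyticAt ℝ Φ p) : AnalyticAt ℝ (Dx Φ) p := by
  have := AnalyticAt.comp ((ContinuousLinearMap.apply ℝ ℝ ((1:ℝ),(0:ℝ))).analyticAt (fderiv ℝ Φ p)) h.fderiv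
  exact this
lemma Dt_an {Φ : ℝ × ℝ → ℝ} {p : ℝ × ℝ} (h : AnalyticAt ℝ Φ p) : AnalyticAt ℝ (Dt Φ) p := by
  have := AnalyticAt.comp ((ContinuousLinearMap.apply ℝ ℝ ((0:ℝ),(1:ℝ))).analyticAt (fderiv ℝ Φ p)) h.fderiv
  exact this

lemma Dx_hd {Φ : ℝ × ℝ → ℝ} {x t : ℝ} (h : AnalyticAt ℝ Φ (x, t)) :
    HasDerivAt (fun y => Φ (y, t)) (Dx Φ (x, t)) x := by
  have h1 : HasDerivAt (fun y : ℝ => (y, t)) ((1 : ℝ), (0 : ℝ)) x :=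
    (hasDerivAt_id x).prodMk (hasDerivAt_const x t)
  exact HasFDerivAt.comp_hasDerivAt (l := Φ) (f := fun y : ℝ => (y, t)) x
    h.differentiableAt.hasFDerivAt h1
lemma Dt_hd {Φ : ℝ × ℝ → ℝ} {x t : ℝ} (h : AnalyticAt ℝ Φ (x, t)) :
    HasDerivAt (fun y => Φ (x, y)) (Dt Φ (x, t)) t := by
  have h1 : HasDerivAt (fun y : ℝ => (x, y)) ((0 : ℝ), (1 : ℝ)) t :=
    (hasDerivAt_const t x).prodMk (hasDerivAt_id t)
  exact HasFDerivAt.comp_hasDerivAt (l := Φ) (f := fun y : ℝ => (x, y)) t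
    h.differentiableAt.hasFDerivAt h1

lemma Dx_congr {Φ Ψ : ℝ × ℝ → ℝ} {p : ℝ × ℝ} (h : Φ =ᶠ[𝓝 p] Ψ) : Dx Φ p = Dx Ψ p := by
  simp only [Dx, h.fderiv_eq]
lemma Dt_congr {Φ Ψ : ℝ × ℝ → ℝ} {p : ℝ × ℝ} (h : Φ =ᶠ[𝓝 p] Ψ) : Dt Φ p = Dt Ψ p := by
  simp only [Dt, h.fderiv_eq]

lemma D_comm {Φ : ℝ × ℝ → ℝ} {p : ℝ × ℝ} (h : AnalyticAt ℝ Φ p) :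
    Dx (Dt Φ) p = Dt (Dx Φ) p := by
  have hs : IsSymmSndFDerivAt ℝ Φ p := h.contDiffAt.isSymmSndFDerivAt_of_omega
  have hd := h.fderiv.differentiableAt
  have e1 : Dx (Dt Φ) p = fderiv ℝ (fderiv ℝ Φ) p (1, 0) (0, 1) := by
    unfold Dx Dt
    rw [fderiv_clm_apply hd (by fun_prop)]
    simp
  have e2 : Dt (Dx Φ) p = fderiv ℝ (fderiv ℝ Φ) p (0, 1) (1, 0) := by
    unfold Dx Dt
    rw [fderiv_clm_apply hd (by fun_prop)]
    simp
  rw [e1, e2, hs]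

def PDE (γ a b : ℝ) (Φ : ℝ × ℝ → ℝ) (p : ℝ × ℝ) : Prop :=
  p.1 * (1 - p.1) * Dx (Dx Φ) p + (γ - (b - a + 1) * p.1) * Dx Φ p
    + p.2 ^ 2 * Dt (Dt Φ) p + (1 + a + b) * p.2 * Dt Φ p + a * b * Φ p = 0

lemma pde_step (γ a b : ℝ) (Φ : ℝ × ℝ → ℝ) (p : ℝ × ℝ) (h : AnalyticAt ℝ Φ p)
    (hp : ∀ᶠ y in 𝓝 p, PDE γ a b Φ y) : PDE γ (a + 1) (b + 1) (Dt Φ) p := by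
  obtain ⟨x, t⟩ := p
  have c1 : Dx (Dt Φ) =ᶠ[𝓝 (x, t)] Dt (Dx Φ) := by
    filter_upwards [h.eventually_analyticAt] with y hy using D_comm hy
  have c2 : Dx (Dx (Dt Φ)) (x, t) = Dt (Dx (Dx Φ)) (x, t) := by
    rw [Dx_congr c1, D_comm (Dx_an h)]
  have d0 := Dt_hd h
  have dx := Dt_hd (Dx_an h)
  have dxx := Dt_hd (Dx_an (Dx_an h))
  have d1 := Dt_hd (Dt_an h)
  have d2 := Dt_hd (Dt_an (Dt_an h))
  have i := hasDerivAt_id t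
  have D := ((((dxx.const_mul (x * (1 - x))).add (dx.const_mul (γ - (b - a + 1) * x))).add
    ((i.pow 2).mul d2)).add ((i.const_mul (1 + a + b)).mul d1)).add (d0.const_mul (a * b))
  have ct : Tendsto (fun s : ℝ => (x, s)) (𝓝 t) (𝓝 (x, t)) := by
    have : Continuous (fun s : ℝ => (x, s)) := by fun_prop
    exact this.tendsto t
  have Z : HasDerivAt (fun _ : ℝ => (0:ℝ)) _ t := D.congr_of_eventuallyEq (by
    filter_upwards [ct.eventually hp] with y hy
    simp only [PDE] at hy
    simp only [Pi.mul_apply, Pi.add_apply, Pi.pow_apply, id]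
    exact hy.symm)
  have := Z.unique (hasDerivAt_const t (0:ℝ))
  simp only [PDE, id, Pi.pow_apply, c1.self_of_nhds, c2] at this ⊢
  push_cast at this
  simp only [pow_one] at this
  linarith

lemma Dtn_an (Ω : Set (ℝ × ℝ)) (Φ : ℝ × ℝ → ℝ) (h : AnalyticOnNhd ℝ Φ Ω) (n : ℕ) :
    AnalyticOnNhd ℝ (Dt^[n] Φ) Ω := by
  induction n with
  | zero => exact h
  | succ n ih =>
    rw [Function.iterate_succ_apply']
    exact fun p hp => Dt_an (ih p hp)

lemma Dtn_pde (Ω : Set (ℝ × ℝ)) (hΩ : IsOpen Ω) (γ a b : ℝ) (Φ : ℝ × ℝ → ℝ)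
    (h : AnalyticOnNhd ℝ Φ Ω) (hp : ∀ p ∈ Ω, PDE γ a b Φ p) (n : ℕ) :
    ∀ p ∈ Ω, PDE γ (a + n) (b + n) (Dt^[n] Φ) p := by
  induction n with
  | zero => simpa using hp
  | succ n ih =>
    rw [Function.iterate_succ_apply']
    intro p hp
    have := pde_step γ (a + n) (b + n) _ p (Dtn_an Ω Φ h n p hp) (by
      filter_upwards [hΩ.mem_nhds hp] with y hy using ih y hy)
    push_cast
    rw [← add_assoc, ← add_assoc]
    exact this

lemma Dtn_iter (Ω : Set (ℝ × ℝ)) (hΩ : IsOpen Ω) (Φ : ℝ × ℝ → ℝ)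
    (h : AnalyticOnNhd ℝ Φ Ω) (n : ℕ) : ∀ x t : ℝ, (x, t) ∈ Ω →
    iteratedDeriv n (fun s => Φ (x, s)) t = (Dt^[n] Φ) (x, t) := by
  induction n with
  | zero => simp
  | succ n ih =>
    intro x t hp
    rw [Function.iterate_succ_apply', iteratedDeriv_succ]
    rw [← (Dt_hd (Dtn_an Ω Φ h n (x, t) hp)).deriv]
    apply Filter.EventuallyEq.deriv_eq
    have : Continuous (fun s : ℝ => (x, s)) := by fun_prop
    filter_upwards [(this.tendsto t).eventually (hΩ.mem_nhds hp)] with s hs using ih x s hs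

lemma slice_ode (Ω : Set (ℝ × ℝ)) (γ a b : ℝ) (hΩx : ∀ x : ℝ, |x| < 1 → (x, (0:ℝ)) ∈ Ω)
    (Ψ : ℝ × ℝ → ℝ)
    (h : AnalyticOnNhd ℝ Ψ Ω) (hp : ∀ p ∈ Ω, PDE γ a b Ψ p) (x : ℝ) (hx : |x| < 1) :
    ODE (-a) b γ (fun y => Ψ (y, 0)) x := by
  have d1 : ∀ y : ℝ, |y| < 1 → deriv (fun y => Ψ (y, 0)) y = Dx Ψ (y, 0) := fun y hy =>
    (Dx_hd (h _ (hΩx y hy))).deriv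
  have d2 : deriv (deriv (fun y => Ψ (y, 0))) x = Dx (Dx Ψ) (x, 0) := by
    rw [← (Dx_hd (Dx_an (h _ (hΩx x hx)))).deriv]
    apply Filter.EventuallyEq.deriv_eq
    have : ∀ᶠ y : ℝ in 𝓝 x, |y| < 1 := (isOpen_lt continuous_abs continuous_const).mem_nhds hx
    filter_upwards [this] with y hy using d1 y hy
  have := hp _ (hΩx x hx)
  simp only [PDE] at this
  simp only [ODE, d1 x hx, d2]
  linarith

theorem core (Ω : Set (ℝ × ℝ)) (hΩ : IsOpen Ω) (γ a b : ℝ) (hγ : ∀ m : ℕ, γ ≠ -(m : ℝ))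
    (hΩx : ∀ x : ℝ, |x| < 1 → (x, (0:ℝ)) ∈ Ω) (Φ : ℝ × ℝ → ℝ)
    (h : AnalyticOnNhd ℝ Φ Ω) (hp : ∀ p ∈ Ω, PDE γ a b Φ p) (n : ℕ) (x : ℝ) (hx : |x| < 1) :
    iteratedDeriv n (fun s => Φ (x, s)) 0 =
      iteratedDeriv n (fun s => Φ (0, s)) 0 * hyp (-(a + n)) (b + n) γ x := by
  rw [Dtn_iter Ω hΩ Φ h n x 0 (hΩx x hx), Dtn_iter Ω hΩ Φ h n 0 0 (hΩx 0 (by simp))]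
  set Ψ := Dt^[n] Φ with hΨ
  have hΨa := Dtn_an Ω Φ h n
  have hΨp := Dtn_pde Ω hΩ γ a b Φ h hp n
  have ho := slice_ode Ω γ (a + n) (b + n) hΩx Ψ hΨa hΨp
  have han : AnalyticOnNhd ℝ (fun y => Ψ (y, 0)) (Ioo (-1) 1) := by
    intro y hy
    have h1 : AnalyticAt ℝ (fun y : ℝ => (y, (0:ℝ))) y := by fun_prop
    exact AnalyticAt.fun_comp (g := Ψ) (hΨa _ (hΩx y (abs_lt.2 hy))) h1
  have hu := ode_unique (-(a + n)) (b + n) γ hγ (fun y => Ψ (y, 0)) (han 0 (by simp)) (by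
    have : ∀ᶠ y : ℝ in 𝓝 0, |y| < 1 :=
      (isOpen_lt continuous_abs continuous_const).mem_nhds (by simp)
    filter_upwards [this] with y hy using ho y hy)
  have han2 : AnalyticOnNhd ℝ (fun y => Ψ (0, 0) * hyp (-(a + n)) (b + n) γ y) (Ioo (-1) 1) :=
    fun y hy => analyticAt_const.mul (hyp_analytic _ _ _ hγ y (abs_lt.2 hy))
  exact han.eqOn_of_preconnected_of_eventuallyEq han2 isPreconnected_Ioo
    (show (0:ℝ) ∈ Ioo (-1:ℝ) 1 by simp) hu (abs_lt.1 hx)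

def Rf (p : ℝ × ℝ) : ℝ := (1 + p.2) ^ 2 - 4 * p.1 * p.2
def qf (p : ℝ × ℝ) : ℝ := ((1 + p.2) + Real.sqrt (Rf p)) / 2
def δf (p : ℝ × ℝ) : ℝ := p.1 / qf p
def wf (p : ℝ × ℝ) : ℝ := p.2 / qf p
def Om : Set (ℝ × ℝ) := {p | 0 < Rf p ∧ 0 < qf p ∧ |p.1| < qf p ∧ |p.2| < qf p}

lemma Rf_cont : Continuous Rf := by unfold Rf; fun_prop
lemma qf_cont : Continuous qf := by
  unfold qf
  have := Rf_cont
  fun_prop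

lemma Om_open : IsOpen Om := by
  have h1 := Rf_cont
  have h2 := qf_cont
  refine (isOpen_lt continuous_const h1).inter ((isOpen_lt continuous_const h2).inter
    ((isOpen_lt (by fun_prop) h2).inter (isOpen_lt (by fun_prop) h2)))

lemma qf_zero (x : ℝ) : qf (x, 0) = 1 := by simp [qf, Rf]

lemma Om_x (x : ℝ) (hx : |x| < 1) : (x, (0:ℝ)) ∈ Om := by
  simp [Om, qf_zero, hx, Rf]

lemma qf_an {p : ℝ × ℝ} (h : 0 < Rf p) : AnalyticAt ℝ qf p := by
  have h1 : AnalyticAt ℝ Rf p := by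
    unfold Rf
    exact (((analyticAt_const.add analyticAt_snd).pow 2).sub
      ((analyticAt_const.mul analyticAt_fst).mul analyticAt_snd))
  have h2 : AnalyticAt ℝ (fun p => Real.sqrt (Rf p)) p := by
    simp only [Real.sqrt_eq_rpow]
    exact an_rpow h1 h _
  have h3 : AnalyticAt ℝ (fun p : ℝ × ℝ => 1 + p.2) p :=
    analyticAt_const.add analyticAt_snd
  exact AnalyticAt.div (h3.add h2) analyticAt_const (by norm_num)

lemma q_rel {p : ℝ × ℝ} (h : 0 ≤ Rf p) : qf p ^ 2 = (1 + p.2) * qf p - p.2 * p.1 := by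
  have := Real.sq_sqrt h
  unfold qf
  set S := Real.sqrt (Rf p)
  unfold Rf at this
  linear_combination this / 4

section
variable {x t : ℝ}

lemma s_eq (h : (x, t) ∈ Om) : 1 - wf (x, t) * δf (x, t) = (2 * qf (x, t) - 1 - t) / qf (x, t) := by
  have h1 := q_rel h.1.le
  have h2 := h.2.1
  simp only [wf, δf]
  simp only at h1
  field_simp
  linear_combination -h1

lemma D_eq (h : (x, t) ∈ Om) : 1 - wf (x, t) + wf (x, t) * δf (x, t) = 1 / qf (x, t) := by
  have h1 := q_rel h.1.le
  have h2 := h.2.1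
  simp only [wf, δf]
  simp only at h1
  field_simp
  linear_combination h1

lemma S_pos (h : (x, t) ∈ Om) : 0 < 2 * qf (x, t) - 1 - t := by
  have := Real.sqrt_pos.2 h.1
  simp only [qf]
  linarith

lemma S_sqrt : Real.sqrt (Rf (x, t)) = 2 * qf (x, t) - 1 - t := by
  simp only [qf]
  ring

lemma q_x (h : (x, t) ∈ Om) :
    HasDerivAt (fun y => qf (y, t)) (-t / (2 * qf (x, t) - 1 - t)) x := by
  have hR : HasDerivAt (fun y => Rf (y, t)) (-4 * t) x := by
    have := ((hasDerivAt_id x).const_mul (-4 * t)).const_add ((1 + t) ^ 2)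
    refine (this.congr_of_eventuallyEq (Eventually.of_forall fun y => ?_)).congr_deriv (by ring)
    simp [Rf]; ring
  have := ((hR.sqrt h.1.ne').const_add (1 + t)).div_const 2
  refine (this.congr_of_eventuallyEq (Eventually.of_forall fun y => ?_)).congr_deriv ?_
  · simp [qf]
  · rw [S_sqrt]
    have := S_pos h
    field_simp
    ring

lemma q_t (h : (x, t) ∈ Om) :
    HasDerivAt (fun y => qf (x, y)) ((qf (x, t) - x) / (2 * qf (x, t) - 1 - t)) t := by
  have hR : HasDerivAt (fun y => Rf (x, y)) (2 * (1 + t) - 4 * x) t := by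
    have := (((hasDerivAt_id t).const_add 1).pow 2).sub ((hasDerivAt_id t).const_mul (4 * x))
    refine (this.congr_of_eventuallyEq (Eventually.of_forall fun y => ?_)).congr_deriv
      (by simp)
    simp [Rf]
  have := (((hasDerivAt_id t).const_add 1).add (hR.sqrt h.1.ne')).div_const 2
  refine (this.congr_of_eventuallyEq (Eventually.of_forall fun y => ?_)).congr_deriv ?_
  · simp [qf]
  · rw [S_sqrt]
    have := S_pos h
    field_simp
    ring

lemma δ_x (h : (x, t) ∈ Om) : HasDerivAt (fun y => δf (y, t))
    ((1 - wf (x, t) + wf (x, t) * δf (x, t)) / (1 - wf (x, t) * δf (x, t))) x := by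
  refine ((hasDerivAt_id x).div (q_x h) h.2.1.ne').congr_deriv ?_
  rw [s_eq h, D_eq h]
  have h1 := q_rel h.1.le
  have h2 := h.2.1
  have h3 := S_pos h
  simp only at h1
  simp only [id]
  generalize qf (x, t) = q at *
  obtain ⟨S, hS⟩ : ∃ S, S = 2 * q - 1 - t := ⟨_, rfl⟩
  rw [← hS] at h3 ⊢
  field_simp
  linear_combination q * hS + h1

lemma w_x (h : (x, t) ∈ Om) : HasDerivAt (fun y => wf (y, t))
    (wf (x, t) ^ 2 * ((1 - wf (x, t) + wf (x, t) * δf (x, t)) / (1 - wf (x, t) * δf (x, t)))) x := by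
  refine ((hasDerivAt_const x t).div (q_x h) h.2.1.ne').congr_deriv ?_
  rw [s_eq h, D_eq h]
  have h2 := h.2.1
  have h3 := S_pos h
  simp only [wf]
  generalize qf (x, t) = q at *
  field_simp
  ring

lemma δ_t (h : (x, t) ∈ Om) : HasDerivAt (fun y => δf (x, y))
    (-(δf (x, t) * (1 - δf (x, t))) *
     ((1 - wf (x, t) + wf (x, t) * δf (x, t)) / (1 - wf (x, t) * δf (x, t)))) t := by
  refine ((hasDerivAt_const t x).div (q_t h) h.2.1.ne').congr_deriv ?_
  rw [s_eq h, D_eq h]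
  have h2 := h.2.1
  have h3 := S_pos h
  simp only [δf]
  generalize qf (x, t) = q at *
  field_simp
  ring

lemma w_t (h : (x, t) ∈ Om) : HasDerivAt (fun y => wf (x, y))
    ((1 - wf (x, t)) *
     ((1 - wf (x, t) + wf (x, t) * δf (x, t)) / (1 - wf (x, t) * δf (x, t)))) t := by
  refine ((hasDerivAt_id t).div (q_t h) h.2.1.ne').congr_deriv ?_
  rw [s_eq h, D_eq h]
  have h1 := q_rel h.1.le
  have h2 := h.2.1
  have h3 := S_pos h
  simp only at h1
  simp only [id, wf]
  generalize qf (x, t) = q at *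
  obtain ⟨S, hS⟩ : ∃ S, S = 2 * q - 1 - t := ⟨_, rfl⟩
  rw [← hS] at h3 ⊢
  field_simp
  linear_combination q * hS + h1

lemma δ_lt (h : (x, t) ∈ Om) : |δf (x, t)| < 1 := by
  rw [δf, abs_div, abs_of_pos h.2.1, div_lt_one h.2.1]; exact h.2.2.1
lemma w_lt (h : (x, t) ∈ Om) : |wf (x, t)| < 1 := by
  rw [wf, abs_div, abs_of_pos h.2.1, div_lt_one h.2.1]; exact h.2.2.2
end

lemma δ_an {p : ℝ × ℝ} (h : p ∈ Om) : AnalyticAt ℝ δf p :=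
  AnalyticAt.div analyticAt_fst (qf_an h.1) h.2.1.ne'
lemma w_an {p : ℝ × ℝ} (h : p ∈ Om) : AnalyticAt ℝ wf p :=
  AnalyticAt.div analyticAt_snd (qf_an h.1) h.2.1.ne'

/-- first derivative along a curve -/
lemma der1 (A : ℝ) (f g δ w : ℝ → ℝ) (y f1 g1 e1 e2 : ℝ)
    (hδ : HasDerivAt δ e1 y) (hw : HasDerivAt w e2 y)
    (hf : HasDerivAt f f1 (δ y)) (hg : HasDerivAt g g1 (w y))
    (hD : 0 < 1 - w y + w y * δ y) :
    HasDerivAt (fun y => (1 - w y + w y * δ y) ^ A * (f (δ y) * g (w y)))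
      ((1 - w y + w y * δ y) ^ A * (A * (-e2 + (e2 * δ y + w y * e1)) / (1 - w y + w y * δ y)
        * (f (δ y) * g (w y)) + (e1 * f1 * g (w y) + e2 * f (δ y) * g1))) y := by
  have h1 := (((hw.const_sub 1).add (hw.mul hδ)).rpow_const (p := A) (Or.inl hD.ne')).mul
    ((hf.comp y hδ).mul (hg.comp y hw))
  refine (h1.congr_of_eventuallyEq (Eventually.of_forall fun y => ?_)).congr_deriv ?_
  · rfl
  · simp only [Pi.add_apply, Pi.mul_apply, Function.comp]
    rw [Real.rpow_sub_one hD.ne']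
    field_simp

def Hf (A : ℝ) (f g : ℝ → ℝ) (p : ℝ × ℝ) : ℝ :=
  (1 - wf p + wf p * δf p) ^ A * (f (δf p) * g (wf p))

lemma D_pos {p : ℝ × ℝ} (h : p ∈ Om) : 0 < 1 - wf p + wf p * δf p := by
  obtain ⟨x, t⟩ := p
  rw [D_eq h]
  exact one_div_pos.2 h.2.1

lemma s_pos {p : ℝ × ℝ} (h : p ∈ Om) : 0 < 1 - wf p * δf p := by
  obtain ⟨x, t⟩ := p
  rw [s_eq h]
  exact div_pos (S_pos h) h.2.1

lemma Hf_an (A : ℝ) (f g : ℝ → ℝ) (hf : ∀ x : ℝ, |x| < 1 → AnalyticAt ℝ f x)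
    (hg : ∀ x : ℝ, |x| < 1 → AnalyticAt ℝ g x) : AnalyticOnNhd ℝ (Hf A f g) Om := by
  intro p hp
  have hw := w_an hp
  have hd := δ_an hp
  have h1 : AnalyticAt ℝ (fun p => 1 - wf p + wf p * δf p) p :=
    (analyticAt_const.sub hw).add (hw.mul hd)
  exact (an_rpow h1 (D_pos hp) A).mul
    (((hf _ (δ_lt (x := p.1) (t := p.2) hp)).comp hd).mul
     ((hg _ (w_lt (x := p.1) (t := p.2) hp)).comp hw))

/-- derivative of `D^A (D/s) K` along a curve -/
lemma der2 (A : ℝ) (K δ w : ℝ → ℝ) (y k e1 e2 : ℝ)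
    (hδ : HasDerivAt δ e1 y) (hw : HasDerivAt w e2 y) (hK : HasDerivAt K k y)
    (hD : 0 < 1 - w y + w y * δ y) (hs : 0 < 1 - w y * δ y) :
    HasDerivAt (fun y => (1 - w y + w y * δ y) ^ A * ((1 - w y + w y * δ y) / (1 - w y * δ y) * K y))
      ((1 - w y + w y * δ y) ^ A * ((A + 1) * (-e2 + (e2 * δ y + w y * e1)) / (1 - w y * δ y) * K y
        + (1 - w y + w y * δ y) * (e2 * δ y + w y * e1) / (1 - w y * δ y) ^ 2 * K y
        + (1 - w y + w y * δ y) / (1 - w y * δ y) * k)) y := by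
  have hDd := (hw.const_sub 1).add (hw.mul hδ)
  have h1 := (hDd.rpow_const (p := A) (Or.inl hD.ne')).mul
    ((hDd.div ((hw.mul hδ).const_sub 1) hs.ne').mul hK)
  refine (h1.congr_of_eventuallyEq (Eventually.of_forall fun y => ?_)).congr_deriv ?_
  · rfl
  · simp only [Pi.add_apply, Pi.mul_apply, Pi.div_apply]
    rw [Real.rpow_sub_one hD.ne']
    generalize 1 - w y + w y * δ y = D at *
    generalize 1 - w y * δ y = s at *
    field_simp
    ring

section
variable (A : ℝ) (f g : ℝ → ℝ)

def Kx (p : ℝ × ℝ) : ℝ := A * wf p * (f (δf p) * g (wf p)) + deriv f (δf p) * g (wf p)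
    + wf p ^ 2 * (f (δf p) * deriv g (wf p))
def Kt (p : ℝ × ℝ) : ℝ := -A * (1 - δf p) * (f (δf p) * g (wf p))
    - δf p * (1 - δf p) * (deriv f (δf p) * g (wf p))
    + (1 - wf p) * (f (δf p) * deriv g (wf p))

lemma Hx_eq (hf : ∀ x : ℝ, |x| < 1 → AnalyticAt ℝ f x)
    (hg : ∀ x : ℝ, |x| < 1 → AnalyticAt ℝ g x) {x t : ℝ} (h : (x, t) ∈ Om)
    : Dx (Hf A f g) (x, t) = (1 - wf (x,t) + wf (x,t) * δf (x,t)) ^ A *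
    ((1 - wf (x,t) + wf (x,t) * δf (x,t)) / (1 - wf (x,t) * δf (x,t)) * Kx A f g (x,t)) := by
  have h1 := der1 A f g (fun y => δf (y, t)) (fun y => wf (y, t)) x _ _ _ _ (δ_x h) (w_x h)
    (hf _ (δ_lt h)).differentiableAt.hasDerivAt (hg _ (w_lt h)).differentiableAt.hasDerivAt (D_pos h)
  rw [(Dx_hd (Hf_an A f g hf hg _ h)).unique h1, Kx]
  have hD := D_pos h
  have hs := s_pos h
  field_simp
  ring

lemma Ht_eq (hf : ∀ x : ℝ, |x| < 1 → AnalyticAt ℝ f x)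
    (hg : ∀ x : ℝ, |x| < 1 → AnalyticAt ℝ g x) {x t : ℝ} (h : (x, t) ∈ Om)
    : Dt (Hf A f g) (x, t) = (1 - wf (x,t) + wf (x,t) * δf (x,t)) ^ A *
    ((1 - wf (x,t) + wf (x,t) * δf (x,t)) / (1 - wf (x,t) * δf (x,t)) * Kt A f g (x,t)) := by
  have h1 := der1 A f g (fun y => δf (x, y)) (fun y => wf (x, y)) t _ _ _ _ (δ_t h) (w_t h)
    (hf _ (δ_lt h)).differentiableAt.hasDerivAt (hg _ (w_lt h)).differentiableAt.hasDerivAt (D_pos h)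
  rw [(Dt_hd (Hf_an A f g hf hg _ h)).unique h1, Kt]
  have hD := D_pos h
  have hs := s_pos h
  field_simp
  ring

/-- derivative of the bracket for x -/
lemma Kx_der (δ w : ℝ → ℝ) (y e1 e2 f2 g2 : ℝ) (hδ : HasDerivAt δ e1 y) (hw : HasDerivAt w e2 y)
    (hf : HasDerivAt f (deriv f (δ y)) (δ y)) (hg : HasDerivAt g (deriv g (w y)) (w y))
    (hf2 : HasDerivAt (deriv f) f2 (δ y)) (hg2 : HasDerivAt (deriv g) g2 (w y)) :
    HasDerivAt (fun y => A * w y * (f (δ y) * g (w y)) + deriv f (δ y) * g (w y)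
      + w y ^ 2 * (f (δ y) * deriv g (w y)))
     (A * e2 * (f (δ y) * g (w y)) + A * w y * (deriv f (δ y) * e1 * g (w y) + f (δ y) * (deriv g (w y) * e2))
      + (f2 * e1 * g (w y) + deriv f (δ y) * (deriv g (w y) * e2))
      + (2 * w y * e2 * (f (δ y) * deriv g (w y)) + w y ^ 2 *
        (deriv f (δ y) * e1 * deriv g (w y) + f (δ y) * (g2 * e2)))) y := by
  have hF := hf.comp y hδ
  have hG := hg.comp y hw
  have hF2 := hf2.comp y hδ
  have hG2 := hg2.comp y hw
  have h1 := (((hw.const_mul A).mul (hF.mul hG)).add (hF2.mul hG)).add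
    ((hw.pow 2).mul (hF.mul hG2))
  refine (h1.congr_of_eventuallyEq (Eventually.of_forall fun y => ?_)).congr_deriv ?_
  · rfl
  · simp only [Pi.mul_apply, Function.comp, Pi.pow_apply]
    ring

lemma Kt_der (δ w : ℝ → ℝ) (y e1 e2 f2 g2 : ℝ) (hδ : HasDerivAt δ e1 y) (hw : HasDerivAt w e2 y)
    (hf : HasDerivAt f (deriv f (δ y)) (δ y)) (hg : HasDerivAt g (deriv g (w y)) (w y))
    (hf2 : HasDerivAt (deriv f) f2 (δ y)) (hg2 : HasDerivAt (deriv g) g2 (w y)) :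
    HasDerivAt (fun y => -A * (1 - δ y) * (f (δ y) * g (w y))
      - δ y * (1 - δ y) * (deriv f (δ y) * g (w y)) + (1 - w y) * (f (δ y) * deriv g (w y)))
     (A * e1 * (f (δ y) * g (w y)) - A * (1 - δ y) * (deriv f (δ y) * e1 * g (w y) + f (δ y) * (deriv g (w y) * e2))
      - ((e1 * (1 - 2 * δ y)) * (deriv f (δ y) * g (w y)) + δ y * (1 - δ y) *
        (f2 * e1 * g (w y) + deriv f (δ y) * (deriv g (w y) * e2)))
      + (- e2 * (f (δ y) * deriv g (w y)) + (1 - w y) *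
        (deriv f (δ y) * e1 * deriv g (w y) + f (δ y) * (g2 * e2)))) y := by
  have hF := hf.comp y hδ
  have hG := hg.comp y hw
  have hF2 := hf2.comp y hδ
  have hG2 := hg2.comp y hw
  have h1 := ((((hδ.const_sub 1).const_mul (-A)).mul (hF.mul hG)).sub
    ((hδ.mul (hδ.const_sub 1)).mul (hF2.mul hG))).add ((hw.const_sub 1).mul (hF.mul hG2))
  refine (h1.congr_of_eventuallyEq (Eventually.of_forall fun y => ?_)).congr_deriv ?_
  · rfl
  · simp only [Pi.mul_apply, Function.comp]
    ring

end

section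
variable (α β c A C : ℝ) (f g : ℝ → ℝ)

lemma H_pde (hf : ∀ x : ℝ, |x| < 1 → AnalyticAt ℝ f x)
    (hg : ∀ x : ℝ, |x| < 1 → AnalyticAt ℝ g x) {x t : ℝ} (h : (x, t) ∈ Om)
    (hA : A = α + β + c + 1) (hC : C = A + c + 1)
    (of : ∀ y : ℝ, |y| < 1 → ODE (-c) A (1 + β) f y)
    (og : ∀ y : ℝ, |y| < 1 → ODE A (α + c + 1) C g y) :
    PDE (1 + β) c A (Hf A f g) (x, t) := by
  have Ha := Hf_an A f g hf hg _ h
  have f1 := (hf _ (δ_lt h)).differentiableAt.hasDerivAt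
  have g1 := (hg _ (w_lt h)).differentiableAt.hasDerivAt
  have f2 := (hf _ (δ_lt h)).deriv.differentiableAt.hasDerivAt
  have g2 := (hg _ (w_lt h)).deriv.differentiableAt.hasDerivAt
  have hD := D_pos h
  have hs := s_pos h
  have hO := Om_open.mem_nhds h
  have cx : Tendsto (fun s : ℝ => (s, t)) (𝓝 x) (𝓝 (x, t)) := by
    have : Continuous (fun s : ℝ => (s, t)) := by fun_prop
    exact this.tendsto x
  have ct : Tendsto (fun s : ℝ => (x, s)) (𝓝 t) (𝓝 (x, t)) := by
    have : Continuous (fun s : ℝ => (x, s)) := by fun_prop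
    exact this.tendsto t
  have kx := der2 A (fun y => Kx A f g (y, t)) (fun y => δf (y, t)) (fun y => wf (y, t)) x _ _ _
    (δ_x h) (w_x h) (Kx_der A f g (fun y => δf (y, t)) (fun y => wf (y, t)) x _ _ _ _
      (δ_x h) (w_x h) f1 g1 f2 g2) hD hs
  have kt := der2 A (fun y => Kt A f g (x, y)) (fun y => δf (x, y)) (fun y => wf (x, y)) t _ _ _
    (δ_t h) (w_t h) (Kt_der A f g (fun y => δf (x, y)) (fun y => wf (x, y)) t _ _ _ _
      (δ_t h) (w_t h) f1 g1 f2 g2) hD hs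
  have exx := (Dx_hd (Dx_an Ha)).unique (kx.congr_of_eventuallyEq (by
    filter_upwards [cx.eventually hO] with y hy using Hx_eq A f g hf hg hy))
  have ett := (Dt_hd (Dt_an Ha)).unique (kt.congr_of_eventuallyEq (by
    filter_upwards [ct.eventually hO] with y hy using Ht_eq A f g hf hg hy))
  have o1 := of _ (δ_lt h)
  have o2 := og _ (w_lt h)
  have ex : x = δf (x, t) / (1 - wf (x,t) + wf (x,t) * δf (x,t)) := by
    rw [D_eq h, δf]
    have := h.2.1
    field_simp
  have et : t = wf (x, t) / (1 - wf (x,t) + wf (x,t) * δf (x,t)) := by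
    rw [D_eq h, wf]
    have := h.2.1
    field_simp
  simp only [PDE]
  rw [exx, ett, Hx_eq A f g hf hg h, Ht_eq A f g hf hg h, Hf]
  simp only [ODE] at o1 o2
  simp only [Kx, Kt]
  clear exx ett kx kt f1 f2 g1 g2 cx ct hO Ha
  generalize δf (x, t) = d at *
  generalize wf (x, t) = w at *
  rw [ex, et]
  clear ex et
  generalize f d = f0 at *
  generalize deriv f d = f1 at *
  generalize deriv (deriv f) d = f2 at *
  generalize g w = g0 at *
  generalize deriv g w = g1 at *
  generalize deriv (deriv g) w = g2 at *
  generalize (1 - w + w * d) ^ A = Z at *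
  obtain ⟨s, es⟩ : ∃ s, s = 1 - w * d := ⟨_, rfl⟩
  obtain ⟨D, eD⟩ : ∃ s, s = 1 - w + w * d := ⟨_, rfl⟩
  rw [← es] at hs ⊢
  rw [← eD] at hD ⊢
  subst hC
  obtain rfl : β = A - α - c - 1 := by linarith
  linear_combination (norm := skip) (Z * g0 * D / s) * o1 + (Z * f0 * w * D / s) * o2
  field_simp
  rw [es, eD]
  ring
end

lemma hyp_iter (a b c : ℝ) (hcn : ∀ m : ℕ, c ≠ -(m : ℝ)) (k : ℕ) :
    iteratedDeriv k (hyp a b c) 0 = k.factorial * hc a b c k := by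
  have h1 : ∀ᶠ y : ℝ in 𝓝 0, |y| < 1 :=
    (isOpen_lt continuous_abs continuous_const).mem_nhds (by simp)
  have := ode_iter a b c hcn (hyp a b c) (hyp_analytic a b c hcn 0 (by simp))
    (by filter_upwards [h1] with y hy using hyp_ode a b c hcn y hy) k
  rw [this, hyp_zero, one_mul]

lemma H_zero (A B C : ℝ) (hC : ∀ m : ℕ, C ≠ -(m : ℝ)) (f : ℝ → ℝ) (f0 : f 0 = 1) (n : ℕ) :
    iteratedDeriv n (fun s => Hf A f (hyp A (C - B) C) (0, s)) 0
      = n.factorial * ((-1) ^ n * hc A B C n) := by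
  have e : (fun s => Hf A f (hyp A (C - B) C) (0, s)) =ᶠ[𝓝 0] fun s => hyp A B C (-s) := by
    have ht : Tendsto (fun s : ℝ => -s) (𝓝 0) (𝓝 0) := by
      have := (continuous_neg (G := ℝ)).tendsto 0
      simpa using this
    filter_upwards [ht.eventually (pfaff A B C hC), eventually_gt_nhds (show (-1:ℝ) < 0 by norm_num)]
      with s hs h1
    have h2 : 0 < 1 + s := by linarith
    have hq : qf (0, s) = 1 + s := by
      simp only [qf, Rf]
      rw [show (1 + s) ^ 2 - 4 * 0 * s = (1 + s) ^ 2 by ring, Real.sqrt_sq h2.le]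
      ring
    rw [← hs, Hf, δf, wf, hq]
    simp only [zero_div, f0, mul_zero, add_zero, one_mul]
    congr 1
    · rw [show 1 - s / (1 + s) = (1 + s)⁻¹ by field_simp; ring, Real.inv_rpow h2.le,
        ← Real.rpow_neg h2.le]
      congr 1
      ring
    · congr 1
      rw [show -s - 1 = -(1 + s) by ring, neg_div_neg_eq]
  rw [e.iteratedDeriv_eq, iteratedDeriv_comp_neg]
  simp only [neg_zero, hyp_iter A B C hC, smul_eq_mul]
  ring

section
variable {x t : ℝ}

lemma R_pos (hx0 : 0 < x) (hx1 : x < 1) (ht : |t| < 1) :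
    0 < Rf (x, t) := by
  rw [abs_lt] at ht
  simp only [Rf]
  rcases le_or_gt t 0 with h | h
  · nlinarith
  · nlinarith [mul_pos h (sub_pos.2 hx1), mul_pos (sub_pos.2 ht.2) (sub_pos.2 ht.2)]

lemma q_pos (hx0 : 0 < x) (hx1 : x < 1) (ht : |t| < 1) :
    0 < qf (x, t) := by
  have := Real.sqrt_nonneg (Rf (x, t))
  rw [abs_lt] at ht
  simp only [qf]
  linarith

lemma x_lt_q (hx0 : 0 < x) (hx1 : x < 1) (ht : |t| < 1) :
    x < qf (x, t) := by
  have : 2 * x - 1 - t < Real.sqrt (Rf (x, t)) := by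
    apply Real.lt_sqrt_of_sq_lt
    simp only [Rf]
    nlinarith
  simp only [qf]
  linarith

lemma t_lt_q (hx0 : 0 < x) (hx1 : x < 1) (ht : |t| < 1) :
    t < qf (x, t) := by
  have := Real.sqrt_nonneg (Rf (x, t))
  rw [abs_lt] at ht
  simp only [qf]
  linarith

lemma one_sub_eq (hx0 : 0 < x) (hx1 : x < 1) (ht : |t| < 1) :
    1 - t * (x / qf (x, t)) = (1 - t / qf (x, t)) * qf (x, t) := by
  have h1 := q_rel (R_pos hx0 hx1 ht).le
  have h2 := q_pos hx0 hx1 ht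
  simp only at h1
  field_simp
  linear_combination -h1

lemma one_sub_w_pos (hx0 : 0 < x) (hx1 : x < 1) (ht : |t| < 1) :
    0 < 1 - t / qf (x, t) := by
  have h2 := q_pos hx0 hx1 ht
  rw [sub_pos, div_lt_one h2]
  exact t_lt_q hx0 hx1 ht

lemma one_sub_pos (hx0 : 0 < x) (hx1 : x < 1) (ht : |t| < 1) :
    0 < 1 - t * (x / qf (x, t)) := by
  rw [one_sub_eq hx0 hx1 ht]
  exact mul_pos (one_sub_w_pos hx0 hx1 ht) (q_pos hx0 hx1 ht)

lemma d_lt (hx0 : 0 < x) (hx1 : x < 1) (ht : |t| < 1) :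
    |x / qf (x, t)| < 1 := by
  have h2 := q_pos hx0 hx1 ht
  rw [abs_of_pos (div_pos hx0 h2), div_lt_one h2]
  exact x_lt_q hx0 hx1 ht
end

def Phi (α β c x t : ℝ) : ℝ :=
  qf (x, t) ^ (-(β + c + 1)) * (1 - t * (x / qf (x, t))) ^ (-α)
    * hyp (-c) (α + β + c + 1) (1 + β) (x / qf (x, t))
    * hypExt (β + c + 1) (c + 1) (α + β + 2 * c + 2) (t / qf (x, t))

lemma Phi_an (α β c x t : ℝ) (h₁ : ∀ m : ℕ, 1 + β ≠ -(m : ℝ))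
    (h₂ : ∀ m : ℕ, α + β + 2*c + 2 ≠ -(m : ℝ))
    (hx0 : 0 < x) (hx1 : x < 1) (ht : |t| < 1) : AnalyticAt ℝ (Phi α β c x) t := by
  have hq : AnalyticAt ℝ (fun t => qf (x, t)) t :=
    AnalyticAt.fun_comp (g := qf) (f := fun t : ℝ => (x, t)) (qf_an (R_pos hx0 hx1 ht))
      (analyticAt_const.prod analyticAt_id)
  have q0 := q_pos hx0 hx1 ht
  have hd : AnalyticAt ℝ (fun t => x / qf (x, t)) t := analyticAt_const.div hq q0.ne'
  have hw : AnalyticAt ℝ (fun t => t / qf (x, t)) t := analyticAt_id.div hq q0.ne'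
  have h1 : AnalyticAt ℝ (fun t => 1 - t * (x / qf (x, t))) t :=
    analyticAt_const.sub (analyticAt_id.mul hd)
  have hw1 := one_sub_w_pos hx0 hx1 ht
  exact (((an_rpow hq q0 _).mul (an_rpow h1 (one_sub_pos hx0 hx1 ht) _)).mul
    (AnalyticAt.fun_comp (hyp_analytic _ _ _ h₁ _ (d_lt hx0 hx1 ht)) hd)).mul
    (AnalyticAt.fun_comp (hypExt_analytic _ _ _ h₂ _ (by linarith)) hw)

lemma Phi_ev (α β c x : ℝ) (h₂ : ∀ m : ℕ, α + β + 2*c + 2 ≠ -(m : ℝ))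
    (hx0 : 0 < x) (hx1 : x < 1) :
    Phi α β c x =ᶠ[𝓝 0] fun t => Hf (α + β + c + 1) (hyp (-c) (α + β + c + 1) (1 + β))
      (hyp (α + β + c + 1) (α + β + 2*c + 2 - (β + c + 1)) (α + β + 2*c + 2)) (x, t) := by
  have ht0 : ∀ᶠ y : ℝ in 𝓝 0, |y| < 1 :=
    (isOpen_lt continuous_abs continuous_const).mem_nhds (by simp)
  have hOm : ∀ᶠ y : ℝ in 𝓝 0, (x, y) ∈ Om := by
    have : Continuous (fun s : ℝ => (x, s)) := by fun_prop
    exact (this.tendsto 0).eventually (Om_open.mem_nhds (Om_x x (by rw [abs_of_pos hx0]; exact hx1)))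
  have hw : Tendsto (fun t => t / qf (x, t)) (𝓝 0) (𝓝 0) := by
    have h1 : Continuous (fun t => qf (x, t)) := qf_cont.comp (by fun_prop)
    have := (continuous_id.tendsto (0:ℝ)).div (h1.tendsto 0) (by simp [qf_zero])
    rw [id, zero_div] at this
    exact this
  filter_upwards [ht0, hOm, hw.eventually (hypExt_ev (β + c + 1) (c + 1) (α + β + 2*c + 2) h₂),
    hw.eventually (euler (β + c + 1) (c + 1) (α + β + 2*c + 2) h₂)] with t ht hO e1 e2
  have q0 := q_pos hx0 hx1 ht
  have w0 := one_sub_w_pos hx0 hx1 ht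
  rw [Phi, e1, e2, Hf, D_eq hO, δf, wf, one_sub_eq hx0 hx1 ht]
  simp only
  rw [Real.mul_rpow w0.le q0.le, hyp_comm (α + β + 2*c + 2 - (β + c + 1))]
  rw [show α + β + 2*c + 2 - (c + 1) = α + β + c + 1 by ring,
    show α + β + 2*c + 2 - (β + c + 1) - (c + 1) = α by ring, one_div, Real.inv_rpow q0.le,
    ← Real.rpow_neg q0.le, Real.rpow_neg w0.le,
    show -(α + β + c + 1) = -(β + c + 1) + -α by ring, Real.rpow_add q0]
  have : (1 - t / qf (x, t)) ^ α ≠ 0 := (Real.rpow_pos_of_pos w0 _).ne'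
  generalize (1 - t / qf (x, t)) ^ α = W at *
  field_simp

lemma Phi_iter (α β c x : ℝ) (h₁ : ∀ m : ℕ, 1 + β ≠ -(m : ℝ))
    (h₂ : ∀ m : ℕ, α + β + 2*c + 2 ≠ -(m : ℝ))
    (hx0 : 0 < x) (hx1 : x < 1) (n : ℕ) :
    iteratedDeriv n (Phi α β c x) 0 = n.factorial *
      ((-1) ^ n * hc (α + β + c + 1) (β + c + 1) (α + β + 2*c + 2) n *
        hyp (-(c + n)) (α + β + c + 1 + n) (1 + β) x) := by
  rw [(Phi_ev α β c x h₂ hx0 hx1).iteratedDeriv_eq]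
  rw [core Om Om_open (1 + β) c (α + β + c + 1) h₁ Om_x _
    (Hf_an _ _ _ (hyp_analytic _ _ _ h₁) (hyp_analytic _ _ _ h₂)) ?_ n x
    (by rw [abs_of_pos hx0]; exact hx1), H_zero _ _ _ h₂ _ (hyp_zero _ _ _)]
  · ring
  · rintro ⟨y, s⟩ hp
    refine H_pde α β c (α + β + c + 1) (α + β + 2*c + 2) _ _ (hyp_analytic _ _ _ h₁)
      (hyp_analytic _ _ _ h₂) hp rfl (by ring) (hyp_ode _ _ _ h₁) ?_
    rw [show α + β + 2*c + 2 - (β + c + 1) = α + c + 1 by ring]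
    exact hyp_ode _ _ _ h₂

lemma delta_eq {x t : ℝ} (hx0 : 0 < x) (hx1 : x < 1) (ht : |t| < 1) (t0 : t ≠ 0) :
    ((1 + t) - Real.sqrt ((1 + t)^2 - 4*x*t)) / (2*t) = x / qf (x, t) := by
  have h2 := q_pos hx0 hx1 ht
  have h1 := Real.sq_sqrt (R_pos hx0 hx1 ht).le
  rw [div_eq_div_iff (by positivity) h2.ne']
  simp only [qf, Rf] at h1 ⊢
  linear_combination -h1 / 2

lemma rhs_eq (α β c x t : ℝ) (hx0 : 0 < x) (hx1 : x < 1) (ht : |t| < 1) :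
    (x / qf (x, t)) ^ (α + β + c + 1) / (x ^ (β + c + 1) * (x - t * (x / qf (x, t))) ^ α)
        * hypExt (-c) (α + β + c + 1) (1 + β) (x / qf (x, t))
        * hypExt (β + c + 1) (c + 1) (α + β + 2*c + 2) (t * (x / qf (x, t)) / x)
      = Phi α β c x t := by
  have q0 := q_pos hx0 hx1 ht
  have d0 := div_pos hx0 q0
  have s0 := one_sub_pos hx0 hx1 ht
  have w0 := one_sub_w_pos hx0 hx1 ht
  have e1 : x - t * (x / qf (x, t)) = x * (1 - t / qf (x, t)) := by field_simp
  have e2 : t * (x / qf (x, t)) / x = t / qf (x, t) := by field_simp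
  rw [e2, e1, Phi, one_sub_eq hx0 hx1 ht]
  congr 2
  · rw [Real.mul_rpow hx0.le w0.le, Real.mul_rpow w0.le q0.le, Real.div_rpow hx0.le q0.le,
      Real.rpow_neg w0.le, show α + β + c + 1 = (β + c + 1) + α by ring, Real.rpow_add hx0,
      Real.rpow_add q0, Real.rpow_neg q0.le, Real.rpow_neg q0.le]
    have := (Real.rpow_pos_of_pos hx0 α).ne'
    have := (Real.rpow_pos_of_pos hx0 (β + c + 1)).ne'
    have := (Real.rpow_pos_of_pos q0 (β + c + 1)).ne'
    have := (Real.rpow_pos_of_pos q0 α).ne'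
    have := (Real.rpow_pos_of_pos w0 α).ne'
    field_simp
  · rw [hypExt, if_neg (not_lt.2 d0.le)]

lemma contig (a b γ : ℝ) (hγ : ∀ m : ℕ, γ ≠ -(m : ℝ)) (x : ℝ) (hx : |x| < 1) :
    hyp a b γ x = hyp a b (γ + 1) x + x / γ * deriv (hyp a b (γ + 1)) x := by
  have hγ' : ∀ m : ℕ, γ + 1 ≠ -(m : ℝ) := fun m hm => hγ (m+1) (by push_cast; linarith)
  have g0 : γ ≠ 0 := by simpa using hγ 0
  have h1 := ps_deriv (hc a b (γ + 1)) (hc_summable a b (γ + 1) hγ') x hx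
  have h2 : HasSum (fun k : ℕ => (k : ℝ) * hc a b (γ + 1) k * x ^ k)
      (x * deriv (hyp a b (γ + 1)) x) := shift_sum _ x _ h1
  have h4 := (hc_summable a b (γ + 1) hγ' x hx).hasSum.add (h2.mul_left γ⁻¹)
  rw [hyp_eq, hyp_eq]
  have h5 : (∑' k, hc a b (γ + 1) k * x ^ k) + x / γ * deriv (hyp a b (γ + 1)) x =
    (∑' k, hc a b (γ + 1) k * x ^ k) + γ⁻¹ * (x * deriv (hyp a b (γ + 1)) x) := by
    field_simp
  rw [h5, ← h4.tsum_eq]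
  congr 1
  ext k
  have p1 := poch_ne γ hγ k
  have p2 := poch_ne _ hγ' k
  have e : γ * poch (γ + 1) k = poch γ k * (γ + k) := by rw [← poch_succ', poch_succ]
  have e2 : poch (γ + 1) k = poch γ k * (γ + k) / γ := by field_simp; linarith
  have e3 : γ + k ≠ 0 := fun h => hγ k (by linarith)
  simp only [hc]
  rw [e2]
  have : (k.factorial : ℝ) ≠ 0 := by positivity
  field_simp
  try ring

lemma energy (a b γ x : ℝ) (hγ : ∀ m : ℕ, γ ≠ -(m : ℝ)) (h12 : 1 / 2 ≤ γ) (hx0 : 0 < x) (hx1 : x < 1)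
    (hab : 0 ≤ -(a * b)) :
    x * (1 - x) * deriv (hyp a b γ) x ^ 2 + -(a * b) * hyp a b γ x ^ 2 ≤
      Real.exp (2 * |a + b| / (1 - x) * x) * -(a * b) := by
  set F := hyp a b γ with hF
  set M := 2 * |a + b| / (1 - x) with hM
  have M0 : 0 ≤ M := div_nonneg (by positivity) (by linarith)
  set E : ℝ → ℝ := fun y => y * (1 - y) * deriv F y ^ 2 + -(a * b) * F y ^ 2 with hE
  have abs1 : ∀ y ∈ Icc 0 x, |y| < 1 := fun y hy => by
    rw [abs_of_nonneg hy.1]; linarith [hy.2]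
  have dE : ∀ y ∈ Icc 0 x, HasDerivAt (fun y => Real.exp (-(M * y)) * E y)
      (Real.exp (-(M * y)) * (-M * E y + deriv F y ^ 2 * (1 - 2 * y - 2 * γ + 2 * (a + b + 1) * y))) y := by
    intro y hy
    have f1 := hyp_hd a b γ hγ y (abs1 y hy)
    have f2 := hyp_hd2 a b γ hγ y (abs1 y hy)
    have o := hyp_ode a b γ hγ y (abs1 y hy)
    rw [← hF] at f1 f2 o
    have i := hasDerivAt_id y
    have h := ((i.const_mul M).neg.exp).mul
      (((i.mul (i.const_sub 1)).mul (f2.pow 2)).add ((f1.pow 2).const_mul (-(a * b))))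
    refine (h.congr_of_eventuallyEq (Eventually.of_forall fun y => ?_)).congr_deriv ?_
    · rfl
    · simp only [hE, Pi.add_apply, Pi.mul_apply, Pi.pow_apply, id]
      linear_combination (2 * Real.exp (-(M * y)) * deriv F y) * o
  have anti : AntitoneOn (fun y => Real.exp (-(M * y)) * E y) (Icc 0 x) := by
    apply antitoneOn_of_deriv_nonpos (convex_Icc 0 x)
    · exact fun y hy => (dE y hy).continuousAt.continuousWithinAt
    · intro y hy
      rw [interior_Icc] at hy
      exact (dE y (Ioo_subset_Icc_self hy)).differentiableAt.differentiableWithinAt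
    · intro y hy
      rw [interior_Icc] at hy
      rw [(dE y (Ioo_subset_Icc_self hy)).deriv]
      apply mul_nonpos_of_nonneg_of_nonpos (Real.exp_pos _).le
      have hk : 1 - 2 * y - 2 * γ + 2 * (a + b + 1) * y ≤ M * (y * (1 - y)) := by
        have h1 : 2 * |a + b| ≤ M * (1 - y) := by
          rw [hM, div_mul_eq_mul_div, le_div_iff₀ (by linarith)]
          exact mul_le_mul_of_nonneg_left (by linarith [hy.2]) (by positivity)
        nlinarith [mul_le_mul_of_nonneg_left h1 hy.1.le, mul_le_mul_of_nonneg_left (le_abs_self (a+b)) hy.1.le]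
      have h2 := mul_le_mul_of_nonneg_left hk (sq_nonneg (deriv F y))
      have h3 : 0 ≤ M * (-(a * b) * F y ^ 2) := by positivity
      simp only [hE]
      nlinarith
  have := anti (left_mem_Icc.2 hx0.le) (right_mem_Icc.2 hx0.le) hx0.le
  simp only [hE, hF, hyp_zero] at this
  rw [Real.exp_neg, inv_mul_le_iff₀ (Real.exp_pos _)] at this
  simpa using this

def PB (u : ℕ → ℝ) : Prop := ∃ p : ℕ, u =O[atTop] fun n : ℕ => (n : ℝ) ^ p

lemma PB.add {u v : ℕ → ℝ} (hu : PB u) (hv : PB v) : PB (fun n => u n + v n) := by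
  obtain ⟨p, hp⟩ := hu
  obtain ⟨q, hq⟩ := hv
  have key : ∀ a b : ℕ, a ≤ b → (fun n : ℕ => (n : ℝ) ^ a) =O[atTop] fun n : ℕ => (n : ℝ) ^ b := by
    intro a b hab
    refine IsBigO.of_bound 1 ?_
    filter_upwards [eventually_ge_atTop 1] with n hn
    have : (1:ℝ) ≤ n := by exact_mod_cast hn
    rw [Real.norm_of_nonneg (by positivity), Real.norm_of_nonneg (by positivity), one_mul]
    exact pow_le_pow_right₀ this hab
  exact ⟨max p q, (hp.trans (key _ _ (le_max_left _ _))).add (hq.trans (key _ _ (le_max_right _ _)))⟩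

lemma PB.mul {u v : ℕ → ℝ} (hu : PB u) (hv : PB v) : PB (fun n => u n * v n) := by
  obtain ⟨p, hp⟩ := hu
  obtain ⟨q, hq⟩ := hv
  refine ⟨p + q, ?_⟩
  simp only [pow_add]
  exact hp.mul hq

lemma PB_const (r : ℝ) : PB (fun _ => r) :=
  ⟨0, by
    simpa using isBigO_const_const r (one_ne_zero (α := ℝ)) (atTop : Filter ℕ)⟩

lemma PB_id : PB (fun n => (n : ℝ)) := ⟨1, by simpa using isBigO_refl (fun n : ℕ => (n : ℝ)) atTop⟩

lemma PB_base (c A γ x : ℝ) (hγ : ∀ m : ℕ, γ ≠ -(m : ℝ)) (h12 : 1 / 2 ≤ γ) (hx0 : 0 < x)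
    (hx1 : x < 1) : PB (fun n => hyp (-(c + n)) (A + n) γ x) ∧
      PB (fun n => deriv (hyp (-(c + n)) (A + n) γ) x) := by
  set κ := Real.exp (2 * |A - c| / (1 - x) * x) with hκ
  have κ0 : 0 < κ := Real.exp_pos _
  have hx : 0 < x * (1 - x) := mul_pos hx0 (by linarith)
  set L := (|c| + 1) * (|A| + 1) with hL
  have L0 : 0 < L := by positivity
  obtain ⟨N, hN⟩ := exists_nat_gt (max |c| |A|)
  have en : ∀ n : ℕ, max N 1 ≤ n → 0 < (c + n) * (A + n) ∧ (c + n) * (A + n) ≤ L * (n:ℝ) ^ 2 ∧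
      x * (1 - x) * deriv (hyp (-(c + n)) (A + n) γ) x ^ 2
        + (c + n) * (A + n) * hyp (-(c + n)) (A + n) γ x ^ 2 ≤ κ * ((c + n) * (A + n)) := by
    intro n hn
    have n1 : (1:ℝ) ≤ n := by exact_mod_cast (le_max_right _ _).trans hn
    have nN : (N:ℝ) ≤ n := by exact_mod_cast (le_max_left _ _).trans hn
    have c1 : |c| < n := lt_of_le_of_lt (le_max_left _ _) (hN.trans_le nN)
    have c2 : |A| < n := lt_of_le_of_lt (le_max_right _ _) (hN.trans_le nN)
    have p1 : 0 < c + n := by linarith [neg_abs_le c]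
    have p2 : 0 < A + n := by linarith [neg_abs_le A]
    have pp := mul_pos p1 p2
    refine ⟨pp, ?_, ?_⟩
    · have q1 : c + n ≤ (|c| + 1) * n := by nlinarith [le_abs_self c, abs_nonneg c]
      have q2 : A + n ≤ (|A| + 1) * n := by nlinarith [le_abs_self A, abs_nonneg A]
      calc _ ≤ ((|c| + 1) * n) * ((|A| + 1) * n) := mul_le_mul q1 q2 p2.le (by positivity)
        _ = _ := by rw [hL]; ring
    · have := energy (-(c + n)) (A + n) γ x hγ h12 hx0 hx1 (by linarith)
      rw [show -(c + (n:ℝ)) + (A + n) = A - c by ring, ← hκ,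
        show -(-(c + (n:ℝ)) * (A + n)) = (c + n) * (A + n) by ring] at this
      exact this
  constructor
  · refine ⟨0, IsBigO.of_bound (κ + 1) ?_⟩
    filter_upwards [eventually_ge_atTop (max N 1)] with n hn
    obtain ⟨h1, -, h3⟩ := en n hn
    simp only [pow_zero, norm_one, mul_one, Real.norm_eq_abs]
    have : hyp (-(c + n)) (A + n) γ x ^ 2 ≤ κ := by
      have : 0 ≤ x * (1 - x) * deriv (hyp (-(c + n)) (A + n) γ) x ^ 2 := by positivity
      have h4 : (c + n) * (A + n) * hyp (-(c + n)) (A + n) γ x ^ 2 ≤ (c + n) * (A + n) * κ := by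
        linarith
      exact le_of_mul_le_mul_left h4 h1
    apply abs_le_of_sq_le_sq _ (by linarith)
    nlinarith
  · set Q := κ * L / (x * (1 - x)) with hQ
    have Q0 : 0 < Q := by positivity
    refine ⟨1, IsBigO.of_bound (Q + 1) ?_⟩
    filter_upwards [eventually_ge_atTop (max N 1)] with n hn
    obtain ⟨h1, h2, h3⟩ := en n hn
    simp only [pow_one, Real.norm_eq_abs, Nat.abs_cast]
    have : deriv (hyp (-(c + n)) (A + n) γ) x ^ 2 ≤ Q * (n:ℝ) ^ 2 := by
      have h0 : 0 ≤ (c + n) * (A + n) * hyp (-(c + n)) (A + n) γ x ^ 2 := by positivity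
      have h5 := mul_le_mul_of_nonneg_left h2 κ0.le
      rw [hQ, div_mul_eq_mul_div, le_div_iff₀ hx]
      nlinarith
    apply abs_le_of_sq_le_sq _ (by positivity)
    have : 0 ≤ (n:ℝ) ^ 2 := by positivity
    nlinarith

lemma PB_all (c A x : ℝ) (hx0 : 0 < x) (hx1 : x < 1) (j : ℕ) :
    ∀ γ : ℝ, (∀ m : ℕ, γ ≠ -(m : ℝ)) → 1 / 2 ≤ γ + j →
      PB (fun n => hyp (-(c + n)) (A + n) γ x) ∧
      PB (fun n => deriv (hyp (-(c + n)) (A + n) γ) x) := by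
  induction j with
  | zero =>
    intro γ hγ h
    exact PB_base c A γ x hγ (by simpa using h) hx0 hx1
  | succ j ih =>
    intro γ hγ h
    have hγ' : ∀ m : ℕ, γ + 1 ≠ -(m : ℝ) := fun m hm => hγ (m+1) (by push_cast; linarith)
    obtain ⟨i1, i2⟩ := ih (γ + 1) hγ' (by push_cast at h; linarith)
    have hxa : |x| < 1 := by rw [abs_of_pos hx0]; exact hx1
    have hx : x * (1 - x) ≠ 0 := (mul_pos hx0 (by linarith)).ne'
    constructor
    · have : ∀ n : ℕ, hyp (-(c + n)) (A + n) γ x = hyp (-(c + n)) (A + n) (γ + 1) x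
        + x / γ * deriv (hyp (-(c + n)) (A + n) (γ + 1)) x := fun n => contig _ _ γ hγ x hxa
      simp only [this]
      exact i1.add ((PB_const _).mul i2)
    · have : ∀ n : ℕ, deriv (hyp (-(c + n)) (A + n) γ) x =
          (1 + 1 / γ) * deriv (hyp (-(c + n)) (A + n) (γ + 1)) x
          + x / γ * (1 / (x * (1 - x)) * ((-(γ + 1 - (A - c + 1) * x)) *
            deriv (hyp (-(c + n)) (A + n) (γ + 1)) x +
            -1 * (((c + n) * (A + n)) * hyp (-(c + n)) (A + n) (γ + 1) x))) := by
        intro n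
        have d1 := hyp_hd (-(c + n)) (A + n) (γ + 1) hγ' x hxa
        have d2 := hyp_hd2 (-(c + n)) (A + n) (γ + 1) hγ' x hxa
        have o := hyp_ode (-(c + n)) (A + n) (γ + 1) hγ' x hxa
        have e := d1.add (((hasDerivAt_id x).div_const γ).mul d2)
        have e2 := e.congr_of_eventuallyEq (f₁ := hyp (-(c + n)) (A + n) γ) (by
          have : ∀ᶠ y : ℝ in 𝓝 x, |y| < 1 := (isOpen_lt continuous_abs continuous_const).mem_nhds hxa
          filter_upwards [this] with y hy
          exact contig _ _ γ hγ y hy)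
        rw [e2.deriv]
        have o' : deriv (deriv (hyp (-(c + n)) (A + n) (γ + 1))) x =
          1 / (x * (1 - x)) * ((-(γ + 1 - (A - c + 1) * x)) *
            deriv (hyp (-(c + n)) (A + n) (γ + 1)) x +
            -1 * (((c + n) * (A + n)) * hyp (-(c + n)) (A + n) (γ + 1) x)) := by
          rw [one_div, eq_inv_mul_iff_mul_eq₀ hx]
          linear_combination o
        rw [← o']
        simp only [id]
        ring
      simp only [this]
      exact ((PB_const _).mul i2).add ((PB_const _).mul ((PB_const _).mul
        (((PB_const _).mul i2).add ((PB_const _).mul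
          ((((PB_const _).add PB_id).mul ((PB_const _).add PB_id)).mul i1)))))

lemma main_summable (a b d c A γ x : ℝ) (hd : ∀ m : ℕ, d ≠ -(m : ℝ)) (hγ : ∀ m : ℕ, γ ≠ -(m : ℝ))
    (hx0 : 0 < x) (hx1 : x < 1) (t : ℝ) (ht : |t| < 1) :
    Summable (fun n : ℕ => (-1) ^ n * hc a b d n * hyp (-(c + n)) (A + n) γ x * t ^ n) := by
  obtain ⟨j, hj⟩ := exists_nat_gt (1 / 2 - γ)
  obtain ⟨p, hp⟩ := (PB_all c A x hx0 hx1 j γ hγ (by linarith)).1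
  obtain ⟨r, hr1, hr2⟩ := exists_between ht
  have r0 : 0 < r := (abs_nonneg t).trans_lt hr1
  have hs := (hc_summable a b d hd r (by rw [abs_of_pos r0]; exact hr2)).abs
  have hq : |t| / r < 1 := (div_lt_one r0).2 hr1
  have ht0 := tendsto_pow_const_mul_const_pow_of_abs_lt_one p (r := |t| / r)
    (by rw [abs_of_nonneg (by positivity)]; exact hq)
  refine summable_of_isBigO_nat hs ?_
  have h1 : (fun n : ℕ => (n : ℝ) ^ p * (|t| / r) ^ n) =O[atTop] (fun _ => (1:ℝ)) := ht0.isBigO_one ℝ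
  obtain ⟨K1, h1⟩ := h1.bound
  obtain ⟨K2, hp⟩ := hp.bound
  refine IsBigO.of_bound (|K2| * K1) ?_
  filter_upwards [h1, hp] with n h1 h2
  simp only [norm_mul, norm_pow, norm_neg, norm_one, one_pow, one_mul, mul_one, Real.norm_eq_abs,
    abs_abs, abs_mul, abs_pow, abs_div, abs_of_pos r0, Nat.abs_cast] at h1 h2 ⊢
  have h2' : |hyp (-(c + n)) (A + n) γ x| ≤ |K2| * (n:ℝ) ^ p :=
    h2.trans (mul_le_mul_of_nonneg_right (le_abs_self _) (by positivity))
  have e : |t| ^ n = (|t| / r) ^ n * r ^ n := by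
    rw [← mul_pow, div_mul_cancel₀ _ r0.ne']
  rw [e]
  calc _ ≤ |hc a b d n| * (|K2| * (n:ℝ) ^ p) * ((|t| / r) ^ n * r ^ n) := by gcongr
    _ = |K2| * ((n:ℝ) ^ p * (|t| / r) ^ n) * (|hc a b d n| * r ^ n) := by ring
    _ ≤ |K2| * K1 * (|hc a b d n| * r ^ n) := by gcongr

end Helpers

theorem U_generating_function (α β c x t : ℝ)
    (h₁ : ∀ m : ℕ, 1 + β ≠ -(m : ℝ))
    (h₂ : ∀ m : ℕ, α + β + 2*c + 2 ≠ -(m : ℝ))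
    (h₃ : ∀ m : ℕ, c + 1 ≠ -(m : ℝ))
    (h₄ : ∀ m : ℕ, α + β + c + 1 ≠ -(m : ℝ))
    (h₅ : ∀ m : ℕ, α + β + 2*c + 1 ≠ -(m : ℝ))
    (hx0 : 0 < x) (hx1 : x < 1) (ht0 : 0 < |t|) (ht1 : |t| < 1) :
    (∑' n : ℕ, poch (α + β + c + 1) n * poch (c + 1) n / poch (α + β + 2*c + 2) n
        * Ufun α β c n x * t^n / (Nat.factorial n : ℝ))
    = deltaF x t ^ (α + β + c + 1) / (x ^ (β + c + 1) * (x - t * deltaF x t) ^ α)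
        * hypExt (-c) (α + β + c + 1) (1 + β) (deltaF x t)
        * hypExt (β + c + 1) (c + 1) (α + β + 2*c + 2) (t * deltaF x t / x) := by
  have t0 : t ≠ 0 := abs_pos.1 ht0
  have hu := main_summable (α + β + c + 1) (β + c + 1) (α + β + 2*c + 2) c (α + β + c + 1) (1 + β) x
    h₂ h₁ hx0 hx1
  have hδ : deltaF x t = x / qf (x, t) := delta_eq hx0 hx1 ht1 t0
  rw [hδ, rhs_eq α β c x t hx0 hx1 ht1]
  have hev := taylor_eq _ hu (Phi α β c x) (Phi_an α β c x 0 h₁ h₂ hx0 hx1 (by simp))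
    (Phi_iter α β c x h₁ h₂ hx0 hx1)
  have hmem : ∀ y : ℝ, y ∈ Set.Ioo (-1 : ℝ) 1 → |y| < 1 := fun y hy => abs_lt.2 hy
  have heq := AnalyticOnNhd.eqOn_of_preconnected_of_eventuallyEq (𝕜 := ℝ) (U := Set.Ioo (-1 : ℝ) 1)
    (z₀ := 0) (fun y hy => Phi_an α β c x y h₁ h₂ hx0 hx1 (hmem y hy))
    (fun y hy => ps_analytic _ hu y (hmem y hy)) isPreconnected_Ioo (by norm_num) hev
  rw [heq (abs_lt.1 ht1)]
  refine tsum_congr fun n => ?_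
  have p3 := poch_ne _ h₃ n
  have p2 := poch_ne _ h₂ n
  have hf : (n.factorial : ℝ) ≠ 0 := by positivity
  have e1 : -(n:ℝ) - c = -(c + n) := by ring
  have e2 : (n:ℝ) + α + β + c + 1 = α + β + c + 1 + n := by ring
  simp only [Ufun, hc]
  rw [e1, e2]
  field_simp
end
end

section
/- For every real t with |t| < 1, Σ_{n=0}^{∞} C_{n+1}·𝓐_{n+1}(0)·(−t)^n = −(5/12)·F(11/12, 17/12; 3; t), where C_m = (1/(m+1))·binom(2m, m) is the m-th Catalan number. -/
noncomputable section

/-- The rescaled Atkin polynomials `𝓐_n`. -/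
def Atkin : ℕ → ℝ → ℝ
  | 0, _ => 1
  | 1, x => x - 5/12
  | 2, x => x^2 - (205/216) * x + 935/10368
  | n + 3, x =>
      (x - 2 * (((n : ℝ) + 2)^2 - 29/144) / (4 * ((n : ℝ) + 2)^2 - 1)) * Atkin (n + 2) x
      - ((((n : ℝ) + 2) - 13/12) * (((n : ℝ) + 2) - 7/12) * (((n : ℝ) + 2) - 5/12)
          * (((n : ℝ) + 2) + 1/12)
         / (2 * ((n : ℝ) + 2) * (2 * ((n : ℝ) + 2) - 1)^2 * (2 * ((n : ℝ) + 2) - 2)))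
        * Atkin (n + 1) x

lemma atkin_ratio (n : ℕ) : Atkin (n + 2) 0 =
    -(((n : ℝ) + 11/12) * (n + 17/12) / (2 * (n + 1) * (2 * n + 3))) * Atkin (n + 1) 0 := by
  induction n with
  | zero => norm_num [Atkin]
  | succ n ih =>
    have h : Atkin (n + 1 + 2) 0 =
      (0 - 2 * (((n : ℝ) + 2)^2 - 29/144) / (4 * ((n : ℝ) + 2)^2 - 1)) * Atkin (n + 2) 0
      - ((((n : ℝ) + 2) - 13/12) * (((n : ℝ) + 2) - 7/12) * (((n : ℝ) + 2) - 5/12)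
          * (((n : ℝ) + 2) + 1/12)
         / (2 * ((n : ℝ) + 2) * (2 * ((n : ℝ) + 2) - 1)^2 * (2 * ((n : ℝ) + 2) - 2)))
        * Atkin (n + 1) 0 := by
      rw [show n + 1 + 2 = n + 3 from rfl, Atkin]
    rw [h, show n + 1 + 1 = n + 2 from rfl, ih]
    generalize Atkin (n + 1) 0 = a
    have h0 : (0 : ℝ) ≤ n := Nat.cast_nonneg n
    push_cast
    generalize (n : ℝ) = x at *
    have e1 : 4 * (x + 2)^2 - 1 = (2 * x + 3) * (2 * x + 5) := by ring
    have e2 : 2 * (x + 2) * (2 * (x + 2) - 1)^2 * (2 * (x + 2) - 2)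
      = 2 * (x + 2) * (2 * x + 3)^2 * (2 * (x + 1)) := by ring
    have e3 : 2 * (x + 1 + 1) * (2 * (x + 1) + 3) = 2 * (x + 2) * (2 * x + 5) := by ring
    rw [e1, e2, e3]
    have p1 : x + 1 ≠ 0 := by positivity
    have p2 : x + 2 ≠ 0 := by positivity
    have p3 : 2 * x + 3 ≠ 0 := by positivity
    have p4 : 2 * x + 5 ≠ 0 := by positivity
    field_simp
    ring

lemma atkin_coeff (n : ℕ) :
    ((Nat.choose (2*(n + 1)) (n + 1) : ℝ) / ((n + 1 : ℕ) + 1 : ℝ)) * Atkin (n + 1) 0 * (-1)^n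
    = -(5/12) * (poch (11/12) n * poch (17/12) n / (poch 3 n * (Nat.factorial n : ℝ))) := by
  induction n with
  | zero => norm_num [Atkin, poch]
  | succ n ih =>
    have hc : ((n : ℝ) + 2) * (Nat.choose (2 * (n + 1 + 1)) (n + 1 + 1) : ℝ)
        = 2 * (2 * n + 3) * (Nat.choose (2 * (n + 1)) (n + 1) : ℝ) := by
      have := Nat.succ_mul_centralBinom_succ (n + 1)
      simp only [Nat.centralBinom] at this
      have h2 := congrArg (Nat.cast (R := ℝ)) this
      push_cast at h2
      push_cast
      linarith
    have h0 : (0 : ℝ) ≤ n := Nat.cast_nonneg n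
    have hp : poch 3 n ≠ 0 := by
      apply Finset.prod_ne_zero_iff.2
      intro i _
      positivity
    have hf : (Nat.factorial n : ℝ) ≠ 0 := by positivity
    have s : ∀ a, poch a (n + 1) = poch a n * (a + n) := fun a => Finset.prod_range_succ _ _
    have hc' : (Nat.choose (2 * (n + 1 + 1)) (n + 1 + 1) : ℝ)
        = 2 * (2 * n + 3) * (Nat.choose (2 * (n + 1)) (n + 1) : ℝ) / ((n : ℝ) + 2) := by
      rw [eq_div_iff (by positivity), ← hc]; ring
    have R : -(5/12) * (poch (11/12) (n+1) * poch (17/12) (n+1)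
          / (poch 3 (n+1) * (Nat.factorial (n+1) : ℝ)))
        = (-(5/12) * (poch (11/12) n * poch (17/12) n / (poch 3 n * (Nat.factorial n : ℝ))))
          * ((11/12 + n) * (17/12 + n) / ((3 + n) * (n + 1))) := by
      rw [s, s, s, Nat.factorial_succ]
      push_cast
      have : (3 : ℝ) + n ≠ 0 := by positivity
      field_simp
    rw [R, ← ih, hc', show n + 1 + 1 = n + 2 from rfl, atkin_ratio]
    generalize Atkin (n + 1) 0 = a
    generalize (Nat.choose (2 * (n + 1)) (n + 1) : ℝ) = c
    push_cast
    rw [pow_succ]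
    generalize (-1 : ℝ)^n = e
    generalize (n : ℝ) = x at *
    have e1 : x + 2 + 1 = x + 3 := by ring
    have e2 : x + 1 + 1 = x + 2 := by ring
    have e3 : 3 + x = x + 3 := by ring
    rw [e1, e2, e3]
    have p1 : x + 1 ≠ 0 := by positivity
    have p2 : x + 2 ≠ 0 := by positivity
    have p3 : 2 * x + 3 ≠ 0 := by positivity
    have p4 : x + 3 ≠ 0 := by positivity
    field_simp
    ring

theorem atkin_generating_function_at_zero (t : ℝ) (ht : |t| < 1) :
    (∑' n : ℕ, ((Nat.choose (2*(n + 1)) (n + 1) : ℝ) / ((n + 1 : ℕ) + 1 : ℝ))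
        * Atkin (n + 1) 0 * (-t)^n)
    = -(5/12) * hyp (11/12) (17/12) 3 t := by
  rw [hyp, ← tsum_mul_left]
  refine tsum_congr fun n => ?_
  rw [← mul_assoc, ← atkin_coeff, neg_pow]
  ring
end
end

section
/- For every integer n ≥ 0, the value of the rescaled Atkin polynomial at 0 is 𝓐_{n+1}(0) = (−1)^n·(−5/12)·((11/12)_n·(17/12)_n)/(2n+1)!. -/
noncomputable section

theorem atkin_at_zero (n : ℕ) :
    Atkin (n + 1) 0 =
      (-1 : ℝ)^n * (-(5:ℝ)/12) * (poch (11/12) n * poch (17/12) n)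
        / (Nat.factorial (2*n + 1) : ℝ) := by
  induction n using Nat.strong_induction_on with
  | _ n ih =>
    match n, ih with
    | 0, _ => norm_num [Atkin, poch]
    | 1, _ => norm_num [Atkin, poch, Nat.factorial]
    | m + 2, ih =>
      have h1 := ih (m + 1) (by omega)
      have h0 := ih m (by omega)
      have hm : (0 : ℝ) ≤ (m : ℝ) := Nat.cast_nonneg m
      have hf : (Nat.factorial (2 * m + 1) : ℝ) ≠ 0 := by positivity
      have f1 : (Nat.factorial (2 * (m + 1) + 1) : ℝ)
          = (2 * m + 3) * (2 * m + 2) * (Nat.factorial (2 * m + 1) : ℝ) := by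
        rw [show 2 * (m + 1) + 1 = (2 * m + 1) + 1 + 1 by ring, Nat.factorial_succ,
          Nat.factorial_succ]
        push_cast
        ring
      have f2 : (Nat.factorial (2 * (m + 2) + 1) : ℝ)
          = (2 * m + 5) * (2 * m + 4) * ((2 * m + 3) * (2 * m + 2) *
            (Nat.factorial (2 * m + 1) : ℝ)) := by
        rw [← f1, show 2 * (m + 2) + 1 = (2 * (m + 1) + 1) + 1 + 1 by ring, Nat.factorial_succ,
          Nat.factorial_succ]
        push_cast
        ring
      have hp : ∀ (a : ℝ) (k : ℕ), poch a (k + 1) = poch a k * (a + k) := by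
        intro a k
        simp [poch, Finset.prod_range_succ]
      rw [f1, hp, hp] at h1
      have h1' : Atkin (m + 2) 0 = _ := h1
      have p2 : ∀ a : ℝ, poch a (m + 2) = poch a m * (a + m) * (a + (m + 1)) := by
        intro a
        rw [show m + 2 = m + 1 + 1 from rfl, hp, hp]
        push_cast
        ring
      rw [f2, p2, p2, show m + 2 + 1 = m + 3 from rfl, Atkin, h0, h1']
      clear h0 h1 h1' f1 f2 ih
      generalize (Nat.factorial (2 * m + 1) : ℝ) = F at *
      generalize poch (11 / 12) m = P
      generalize poch (17 / 12) m = Q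
      have e1 : (4 * ((m : ℝ) + 2)^2 - 1) = (2 * m + 3) * (2 * m + 5) := by ring
      have e2 : (2 * ((m : ℝ) + 2) - 1) = 2 * m + 3 := by ring
      have e3 : (2 * ((m : ℝ) + 2) - 2) = 2 * m + 2 := by ring
      rw [e1, e2, e3]
      have n2 : (2 * (m : ℝ) + 2) ≠ 0 := by positivity
      have n3 : (2 * (m : ℝ) + 3) ≠ 0 := by positivity
      have n4 : (2 * (m : ℝ) + 4) ≠ 0 := by positivity
      have n5 : (2 * (m : ℝ) + 5) ≠ 0 := by positivity
      have n6 : ((m : ℝ) + 2) ≠ 0 := by positivity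
      have n7 : ((m : ℝ) + 1) ≠ 0 := by positivity
      rw [pow_succ, pow_add]
      field_simp
      ring
end
end
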